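/- arXiv:2111.10699 — 12 statements merged into one kernel-verified Lean document; each statement's English description precedes it below -/
import Mathlib

section
/- Let V be a finite set, let w⁺, w⁻ : pairs of V → ℝ≥0 be weights, let b : pairs of V → ℝ≥0 be budgets, let α > 0, and let Ĝ = (V, Ê) be a graph on V satisfying: (1) for every pair {i,j} ∈ Ê, w⁻_{ij} ≤ α·b_{ij}, and for every pair {i,j} ∉ Ê, w⁺_{ij} ≤ α·b_{ij}; and (2) for every ordered triple (i,k,j) of distinct vertices with {i,j} ∈ Ê, {j,k} ∈ Ê, and {i,k} ∉ Ê, one has w⁺_{ij} + w⁺_{jk} + w⁻_{ik} ≤ α·(b_{ij} + b_{jk} + b_{ik}). Then there exists a partition C of V such that the total weight of disagreements of C, namely the sum of w⁺_{ij} over pairs {i,j} lying in different parts of C plus the sum of w⁻_{ij} over pairs {i,j} lying in the same part of C, is at most α·∑_{i<j} b_{ij}. -/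
open Finset

/-- The finset of ordered pairs `(i, j)` with `i < j`, representing unordered pairs
of distinct elements of `V`. -/
def pairsLt (V : Type*) [Fintype V] [LinearOrder V] : Finset (V × V) :=
  Finset.univ.filter fun p => p.1 < p.2

open Classical in
/-- Excess of cost over budget of the pair `i, j` when `k` is the pivot, for disagreeing pairs. -/
noncomputable def excess {V : Type*} (wp wm b : V → V → ℝ) (α : ℝ) (G : SimpleGraph V)
    (k i j : V) : ℝ :=
  if i = j ∨ i = k ∨ j = k then 0
  else if G.Adj k i ∧ G.Adj k j ∧ ¬ G.Adj i j then wm i j - α * b i j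
  else if G.Adj i j ∧ ¬ (G.Adj k i ↔ G.Adj k j) then wp i j - α * b i j
  else 0

/-- Excess of the cost of a clustering over the budget on one ordered pair. -/
noncomputable def cexc {V : Type*} [LinearOrder V] (wp wm b : V → V → ℝ) (α : ℝ) (C : V → ℕ)
    (i j : V) : ℝ :=
  if i = j then 0 else (if C i = C j then wm i j else wp i j) - α * b i j

theorem excess_cyc {V : Type*} [LinearOrder V]
    (wp wm b : V → V → ℝ)
    (hwpsym : ∀ i j, wp i j = wp j i) (hwmsym : ∀ i j, wm i j = wm j i)
    (hbsym : ∀ i j, b i j = b j i)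
    (hwp0 : ∀ i j, 0 ≤ wp i j) (hwm0 : ∀ i j, 0 ≤ wm i j) (hb0 : ∀ i j, 0 ≤ b i j)
    (α : ℝ) (hα : 0 < α)
    (Ghat : SimpleGraph V)
    (h1a : ∀ i j, Ghat.Adj i j → wm i j ≤ α * b i j)
    (h1b : ∀ i j, i ≠ j → ¬ Ghat.Adj i j → wp i j ≤ α * b i j)
    (h2 : ∀ i j k : V, i ≠ k → Ghat.Adj i j → Ghat.Adj j k → ¬ Ghat.Adj i k →
      wp i j + wp j k + wm i k ≤ α * (b i j + b j k + b i k))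
    (k i j : V) : excess wp wm b α Ghat k i j + excess wp wm b α Ghat i j k
      + excess wp wm b α Ghat j k i ≤ 0 := by
  have e1 := Ghat.adj_comm i k
  have e2 := Ghat.adj_comm j k
  have e3 := Ghat.adj_comm j i
  have a1 := h2 i k j
  have a2 := h2 k i j
  have a3 := h2 i j k
  have s1 := hwpsym i k
  have s2 := hwpsym j k
  have s3 := hwpsym j i
  have t1 := hwmsym i k
  have t2 := hwmsym j k
  have t3 := hwmsym j i
  have u1 := hbsym i k
  have u2 := hbsym j k
  have u3 := hbsym j i
  by_cases n1 : i = j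
  · subst n1; simp [excess]
  by_cases n2 : i = k
  · subst n2; simp [excess]
  by_cases n3 : j = k
  · subst n3; simp [excess]
  have n1' := Ne.symm n1
  have n2' := Ne.symm n2
  have n3' := Ne.symm n3
  by_cases c1 : Ghat.Adj k i <;> by_cases c2 : Ghat.Adj k j <;> by_cases c3 : Ghat.Adj i j <;>
    simp [excess, n1, n2, n3, n1', n2', n3', c1, c2, c3, e1, e2, e3] at a1 a2 a3 ⊢ <;>
    simp only [s1, s2, s3, t1, t2, t3, u1, u2, u3] at a1 a2 a3 ⊢ <;> linarith

theorem cexc_le {V : Type*} [LinearOrder V]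
    (wp wm b : V → V → ℝ)
    (hwpsym : ∀ i j, wp i j = wp j i) (hwmsym : ∀ i j, wm i j = wm j i)
    (hbsym : ∀ i j, b i j = b j i)
    (hwp0 : ∀ i j, 0 ≤ wp i j) (hwm0 : ∀ i j, 0 ≤ wm i j) (hb0 : ∀ i j, 0 ≤ b i j)
    (α : ℝ) (hα : 0 < α)
    (Ghat : SimpleGraph V)
    (h1a : ∀ i j, Ghat.Adj i j → wm i j ≤ α * b i j)
    (h1b : ∀ i j, i ≠ j → ¬ Ghat.Adj i j → wp i j ≤ α * b i j)
    (h2 : ∀ i j k : V, i ≠ k → Ghat.Adj i j → Ghat.Adj j k → ¬ Ghat.Adj i k →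
      wp i j + wp j k + wm i k ≤ α * (b i j + b j k + b i k))
    (k i j : V) (C D : V → ℕ) (hk : ∀ i, (i = k ∨ Ghat.Adj k i) → D i = 0)
    (hk' : ∀ i, ¬ (i = k ∨ Ghat.Adj k i) → D i = C i + 1) :
    cexc wp wm b α D i j ≤ excess wp wm b α Ghat k i j +
      (open Classical in if ¬ (i = k ∨ Ghat.Adj k i) then
        (if ¬ (j = k ∨ Ghat.Adj k j) then cexc wp wm b α C i j else 0) else 0) := by
  by_cases n1 : i = j
  · subst n1; simp [excess, cexc]
  have p1 := h1a i j
  have p2 := h1b i j n1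
  have n1' := Ne.symm n1
  have e1 := Ghat.adj_comm i k
  by_cases n2 : i = k
  · subst n2
    have q1 := hk i
    have q2 := hk j
    have q3 := hk' j
    by_cases c : Ghat.Adj i j <;> simp_all [excess, cexc]
  by_cases n3 : j = k
  · subst n3
    have q1 := hk j
    have q2 := hk i
    have q3 := hk' i
    by_cases c : Ghat.Adj j i <;> simp_all [excess, cexc]
  have q1 := hk i
  have q2 := hk j
  have q3 := hk' i
  have q4 := hk' j
  clear hk hk' h1a h1b h2
  by_cases c1 : Ghat.Adj k i <;> by_cases c2 : Ghat.Adj k j <;> by_cases c3 : Ghat.Adj i j <;>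
    simp_all [excess, cexc]

theorem main_ind {V : Type*} [LinearOrder V]
    (wp wm b : V → V → ℝ)
    (hwpsym : ∀ i j, wp i j = wp j i) (hwmsym : ∀ i j, wm i j = wm j i)
    (hbsym : ∀ i j, b i j = b j i)
    (hwp0 : ∀ i j, 0 ≤ wp i j) (hwm0 : ∀ i j, 0 ≤ wm i j) (hb0 : ∀ i j, 0 ≤ b i j)
    (α : ℝ) (hα : 0 < α)
    (Ghat : SimpleGraph V)
    (h1a : ∀ i j, Ghat.Adj i j → wm i j ≤ α * b i j)
    (h1b : ∀ i j, i ≠ j → ¬ Ghat.Adj i j → wp i j ≤ α * b i j)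
    (h2 : ∀ i j k : V, i ≠ k → Ghat.Adj i j → Ghat.Adj j k → ¬ Ghat.Adj i k →
      wp i j + wp j k + wm i k ≤ α * (b i j + b j k + b i k))
    (n : ℕ) : ∀ S : Finset V, S.card ≤ n →
      ∃ C : V → ℕ, ∑ i ∈ S, ∑ j ∈ S, cexc wp wm b α C i j ≤ 0 := by
  classical
  induction n with
  | zero =>
    intro S hS
    have : S = ∅ := by simpa using hS
    exact ⟨fun _ => 0, by simp [this]⟩
  | succ n ih =>
    intro S hS
    rcases S.eq_empty_or_nonempty with rfl | hne
    · exact ⟨fun _ => 0, by simp⟩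
    have hsum : ∑ k ∈ S, ∑ i ∈ S, ∑ j ∈ S, excess wp wm b α Ghat k i j ≤ 0 := by
      have r1 : ∑ k ∈ S, ∑ i ∈ S, ∑ j ∈ S, excess wp wm b α Ghat i j k =
          ∑ k ∈ S, ∑ i ∈ S, ∑ j ∈ S, excess wp wm b α Ghat k i j := by
        rw [Finset.sum_comm]
        refine Finset.sum_congr rfl fun i _ => ?_
        rw [Finset.sum_comm]
      have r2 : ∑ k ∈ S, ∑ i ∈ S, ∑ j ∈ S, excess wp wm b α Ghat j k i =
          ∑ k ∈ S, ∑ i ∈ S, ∑ j ∈ S, excess wp wm b α Ghat k i j := by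
        rw [Finset.sum_congr rfl fun k _ => Finset.sum_comm]
        rw [Finset.sum_comm]
      have r3 : ∑ k ∈ S, ∑ i ∈ S, ∑ j ∈ S, (excess wp wm b α Ghat k i j
          + excess wp wm b α Ghat i j k + excess wp wm b α Ghat j k i) ≤ 0 :=
        Finset.sum_nonpos fun k _ => Finset.sum_nonpos fun i _ => Finset.sum_nonpos fun j _ =>
          excess_cyc wp wm b hwpsym hwmsym hbsym hwp0 hwm0 hb0 α hα Ghat h1a h1b h2 k i j
      simp only [Finset.sum_add_distrib] at r3
      linarith
    obtain ⟨k, hkS, hk⟩ : ∃ k ∈ S, ∑ i ∈ S, ∑ j ∈ S, excess wp wm b α Ghat k i j ≤ 0 := by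
      by_contra! hcon
      exact absurd (Finset.sum_pos hcon hne) (not_lt.mpr hsum)
    obtain ⟨C, hC⟩ := ih (S.filter fun i => ¬ (i = k ∨ Ghat.Adj k i)) (by
      have : (S.filter fun i => ¬ (i = k ∨ Ghat.Adj k i)).card < S.card :=
        Finset.card_lt_card (Finset.filter_ssubset.mpr ⟨k, hkS, by simp⟩)
      omega)
    refine ⟨fun i => if i = k ∨ Ghat.Adj k i then 0 else C i + 1, ?_⟩
    have hle := Finset.sum_le_sum fun i (_ : i ∈ S) => Finset.sum_le_sum fun j (_ : j ∈ S) =>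
      cexc_le wp wm b hwpsym hwmsym hbsym hwp0 hwm0 hb0 α hα Ghat h1a h1b h2 k i j C
        (fun i => if i = k ∨ Ghat.Adj k i then 0 else C i + 1)
        (fun i hi => if_pos hi) (fun i hi => if_neg hi)
    refine hle.trans ?_
    simp only [Finset.sum_add_distrib]
    rw [Finset.sum_filter] at hC
    simp only [Finset.sum_filter] at hC
    have : ∀ i, (∑ j ∈ S, if ¬ (i = k ∨ Ghat.Adj k i) then
        (if ¬ (j = k ∨ Ghat.Adj k j) then cexc wp wm b α C i j else 0) else 0) =
        if ¬ (i = k ∨ Ghat.Adj k i) then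
        (∑ j ∈ S, if ¬ (j = k ∨ Ghat.Adj k j) then cexc wp wm b α C i j else 0) else 0 := by
      intro i
      split_ifs <;> simp
    simp only [this]
    linarith

/-- Theorem 3.1 of van Zuylen and Williamson: if a graph `Ĝ` satisfies the two budget
conditions with parameter `α > 0`, then there is a partition (clustering) `C` whose total
weight of disagreements is at most `α · ∑_{i<j} b_{ij}`. -/
theorem stmt0 {V : Type*} [Fintype V] [LinearOrder V]
    (wp wm b : V → V → ℝ)
    (hwpsym : ∀ i j, wp i j = wp j i) (hwmsym : ∀ i j, wm i j = wm j i)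
    (hbsym : ∀ i j, b i j = b j i)
    (hwp0 : ∀ i j, 0 ≤ wp i j) (hwm0 : ∀ i j, 0 ≤ wm i j) (hb0 : ∀ i j, 0 ≤ b i j)
    (α : ℝ) (hα : 0 < α)
    (Ghat : SimpleGraph V)
    (h1a : ∀ i j, Ghat.Adj i j → wm i j ≤ α * b i j)
    (h1b : ∀ i j, i ≠ j → ¬ Ghat.Adj i j → wp i j ≤ α * b i j)
    (h2 : ∀ i j k : V, i ≠ k → Ghat.Adj i j → Ghat.Adj j k → ¬ Ghat.Adj i k →
      wp i j + wp j k + wm i k ≤ α * (b i j + b j k + b i k)) :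
    ∃ C : V → ℕ,
      (∑ p ∈ pairsLt V, if C p.1 = C p.2 then wm p.1 p.2 else wp p.1 p.2)
        ≤ α * ∑ p ∈ pairsLt V, b p.1 p.2 := by
  obtain ⟨C, hC⟩ := main_ind wp wm b hwpsym hwmsym hbsym hwp0 hwm0 hb0 α hα Ghat h1a h1b h2
    _ Finset.univ le_rfl
  refine ⟨C, ?_⟩
  rw [← Finset.sum_product', Finset.univ_product_univ] at hC
  have hsymm : ∀ i j, cexc wp wm b α C i j = cexc wp wm b α C j i := by
    intro i j
    simp only [cexc, hwpsym i j, hwmsym i j, hbsym i j, eq_comm (a := i), eq_comm (a := C i)]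
  have hsplit : ∑ p : V × V, cexc wp wm b α C p.1 p.2 =
      ∑ p : V × V, (if p.1 < p.2 then cexc wp wm b α C p.1 p.2 else 0) +
      ∑ p : V × V, (if p.2 < p.1 then cexc wp wm b α C p.1 p.2 else 0) := by
    rw [← Finset.sum_add_distrib]
    refine Finset.sum_congr rfl fun p _ => ?_
    rcases lt_trichotomy p.1 p.2 with h | h | h
    · simp [h, h.not_gt]
    · simp [h, cexc]
    · simp [h, h.not_gt]
  have hswap : ∑ p : V × V, (if p.2 < p.1 then cexc wp wm b α C p.1 p.2 else 0) =
      ∑ p : V × V, (if p.1 < p.2 then cexc wp wm b α C p.1 p.2 else 0) := by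
    refine Fintype.sum_equiv (Equiv.prodComm V V) _ _ fun p => ?_
    change _ = if p.2 < p.1 then cexc wp wm b α C p.2 p.1 else 0
    rw [hsymm p.1 p.2]
  have hfin : ∑ p ∈ pairsLt V, cexc wp wm b α C p.1 p.2 ≤ 0 := by
    rw [pairsLt, Finset.sum_filter]
    linarith
  have heq : ∑ p ∈ pairsLt V, cexc wp wm b α C p.1 p.2 =
      (∑ p ∈ pairsLt V, if C p.1 = C p.2 then wm p.1 p.2 else wp p.1 p.2)
        - α * ∑ p ∈ pairsLt V, b p.1 p.2 := by
    rw [Finset.mul_sum, ← Finset.sum_sub_distrib]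
    refine Finset.sum_congr rfl fun p hp => ?_
    have : p.1 < p.2 := by simpa [pairsLt] using hp
    simp [cexc, this.ne]
  linarith
end

section
/- Let G = (V,E) be a finite simple graph and let x assign to each pair {i,j} of distinct vertices a real number x_{ij} ∈ [0,1] such that x_{ij} ≤ x_{ik} + x_{jk} for every open wedge (i,j,k) centered at k. Then there exists a partition of V whose number of disagreements with respect to G is at most 4·( ∑_{{i,j} ∈ E} x_{ij} + ∑_{{i,j} ∉ E} (1 − x_{ij}) ). -/
open Finset

/-- `(i, j, k)` is an open wedge centered at `k`: `{i,k}` and `{j,k}` are edges but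
`{i,j}` is not (with `i ≠ j`). -/
def IsOpenWedge {V : Type*} (G : SimpleGraph V) (i j k : V) : Prop :=
  G.Adj i k ∧ G.Adj j k ∧ i ≠ j ∧ ¬ G.Adj i j

/-- The number of disagreements of the partition (clustering) `C` with respect to `G`:
pairs `{i,j}` with `{i,j} ∈ E` cut by `C`, or `{i,j} ∉ E` inside a cluster of `C`. -/
def disagreements {V : Type*} [Fintype V] [LinearOrder V]
    (G : SimpleGraph V) [DecidableRel G.Adj] (C : V → ℕ) : ℕ :=
  ((pairsLt V).filter fun p =>
    (G.Adj p.1 p.2 ∧ C p.1 ≠ C p.2) ∨ (¬ G.Adj p.1 p.2 ∧ C p.1 = C p.2)).card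

open Classical in
/-- cost of a pair -/
noncomputable def cc {V : Type*} (G : SimpleGraph V) (x : V → V → ℝ) (i j : V) : ℝ :=
  if i = j then 0 else if G.Adj i j then x i j else 1 - x i j

open Classical in
/-- mistake indicator of a pair, `Q` says together -/
noncomputable def mm {V : Type*} (G : SimpleGraph V) (Q : Prop) (i j : V) : ℝ :=
  if i = j then 0 else if (G.Adj i j ∧ ¬ Q) ∨ (¬ G.Adj i j ∧ Q) then 1 else 0

/-- near -/
def PP {V : Type*} (x : V → V → ℝ) (i j : V) : Prop := i = j ∨ x i j < 1 / 2

open Classical in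
/-- contribution of pair `i j` at pivot `k` -/
noncomputable def FF {V : Type*} (G : SimpleGraph V) (x : V → V → ℝ) (k i j : V) : ℝ :=
  if PP x k i ∨ PP x k j then 4 * cc G x i j - mm G (PP x k i ∧ PP x k j) i j else 0

lemma FF_diag {V : Type*} (G : SimpleGraph V) (x : V → V → ℝ) (k i : V) :
    FF G x k i i = 0 := by
  simp [FF, cc, mm]

lemma FF_comm {V : Type*} (G : SimpleGraph V) (x : V → V → ℝ) (hsym : ∀ i j, x i j = x j i)
    (k i j : V) : FF G x k i j = FF G x k j i := by
  unfold FF cc mm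
  by_cases h : i = j
  · subst h; rfl
  have h' : ¬ j = i := fun e => h e.symm
  by_cases hi : PP x k i <;> by_cases hj : PP x k j <;> by_cases ha : G.Adj i j <;>
    simp [hi, hj, h, h', ha, G.adj_comm j i, hsym j i]

lemma FF_self {V : Type*} (G : SimpleGraph V) (x : V → V → ℝ)
    (h01 : ∀ i j, i ≠ j → 0 ≤ x i j ∧ x i j ≤ 1) (k j : V) :
    0 ≤ FF G x k k j := by
  by_cases h : k = j
  · subst h; simp [FF_diag]
  have := h01 k j h
  have hk : PP x k k := Or.inl rfl
  unfold FF cc mm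
  by_cases h1 : PP x k j <;> by_cases h2 : G.Adj k j <;> simp [hk, h, h1, h2] <;>
    simp [PP, h] at h1 <;> linarith

lemma FF_triple {V : Type*} (G : SimpleGraph V) (x : V → V → ℝ) (hsym : ∀ i j, x i j = x j i)
    (h01 : ∀ i j, i ≠ j → 0 ≤ x i j ∧ x i j ≤ 1)
    (hwedge : ∀ i j k : V, IsOpenWedge G i j k → x i j ≤ x i k + x j k) (a b c : V) :
    0 ≤ FF G x a b c + FF G x b a c + FF G x c a b := by
  by_cases hab : a = b
  · subst hab
    have := FF_self G x h01 a c
    rw [FF_diag]; linarith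
  by_cases hac : a = c
  · subst hac
    have := FF_self G x h01 a b
    rw [FF_diag, FF_comm G x hsym a b a]; linarith
  by_cases hbc : b = c
  · subst hbc
    have := FF_self G x h01 b a
    rw [FF_diag, FF_comm G x hsym b a b]; linarith
  have w1 := hwedge a b c
  have w2 := hwedge a c b
  have w3 := hwedge b c a
  have e1 := h01 a b hab
  have e2 := h01 a c hac
  have e3 := h01 b c hbc
  unfold FF cc mm PP
  unfold IsOpenWedge at w1 w2 w3
  rw [hsym b a, hsym c a] at *
  rw [hsym c b] at *
  rw [G.adj_comm b a, G.adj_comm c a] at w3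
  rw [G.adj_comm c b] at w2
  have hba := Ne.symm hab
  have hca := Ne.symm hac
  have hcb := Ne.symm hbc
  by_cases p1 : x a b < 1 / 2 <;> by_cases p2 : x a c < 1 / 2 <;> by_cases p3 : x b c < 1 / 2 <;>
  by_cases q1 : G.Adj a b <;> by_cases q2 : G.Adj a c <;> by_cases q3 : G.Adj b c <;>
  simp only [hab, hac, hbc, hba, hca, hcb, p1, p2, p3, q1, q2, q3, ne_eq, not_true, not_false_eq_true,
    and_true, true_and, and_false, false_and, or_true, true_or, or_false, false_or, if_true, if_false,
    and_self, or_self, forall_true_left, false_imp_iff, true_imp_iff] at w1 w2 w3 ⊢ <;> linarith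

lemma exists_pivot {V : Type*} (G : SimpleGraph V) (x : V → V → ℝ) (hsym : ∀ i j, x i j = x j i)
    (h01 : ∀ i j, i ≠ j → 0 ≤ x i j ∧ x i j ≤ 1)
    (hwedge : ∀ i j k : V, IsOpenWedge G i j k → x i j ≤ x i k + x j k) (S : Finset V)
    (hS : S.Nonempty) : ∃ k ∈ S, 0 ≤ ∑ i ∈ S, ∑ j ∈ S, FF G x k i j := by
  by_contra! hcon
  have h1 := Finset.sum_lt_sum_of_nonempty hS hcon
  have h2 : 0 ≤ ∑ a ∈ S, ∑ b ∈ S, ∑ c ∈ S, (FF G x a b c + FF G x b a c + FF G x c a b) :=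
    Finset.sum_nonneg fun a _ => Finset.sum_nonneg fun b _ => Finset.sum_nonneg fun c _ =>
      FF_triple G x hsym h01 hwedge a b c
  simp only [Finset.sum_add_distrib] at h2
  have h3 : ∑ a ∈ S, ∑ b ∈ S, ∑ c ∈ S, FF G x b a c = ∑ a ∈ S, ∑ b ∈ S, ∑ c ∈ S, FF G x a b c :=
    Finset.sum_comm
  have h4 : ∑ a ∈ S, ∑ b ∈ S, ∑ c ∈ S, FF G x c a b = ∑ a ∈ S, ∑ b ∈ S, ∑ c ∈ S, FF G x a b c := by
    rw [← h3]
    refine Finset.sum_congr rfl fun a _ => Finset.sum_comm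
  simp only [Finset.sum_const_zero] at h1
  linarith

lemma pivot_main {V : Type*} (G : SimpleGraph V) (x : V → V → ℝ) (hsym : ∀ i j, x i j = x j i)
    (h01 : ∀ i j, i ≠ j → 0 ≤ x i j ∧ x i j ≤ 1)
    (hwedge : ∀ i j k : V, IsOpenWedge G i j k → x i j ≤ x i k + x j k) (S : Finset V) :
    ∃ C : V → ℕ, 0 ≤ ∑ i ∈ S, ∑ j ∈ S, (4 * cc G x i j - mm G (C i = C j) i j) := by
  classical
  induction S using Finset.strongInduction with
  | H S ih =>
  rcases S.eq_empty_or_nonempty with rfl | hS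
  · exact ⟨fun _ => 0, by simp⟩
  obtain ⟨k, hk, hF⟩ := exists_pivot G x hsym h01 hwedge S hS
  obtain ⟨C, hC⟩ := ih (S.filter fun i => ¬ PP x k i)
    (Finset.filter_ssubset.2 ⟨k, hk, by simp [PP]⟩)
  refine ⟨fun i => if PP x k i then 0 else C i + 1, ?_⟩
  simp only [Finset.sum_filter] at hC
  have := add_nonneg hF hC
  rw [← Finset.sum_add_distrib] at this
  refine this.trans (le_of_eq ?_)
  refine Finset.sum_congr rfl fun i _ => ?_
  by_cases hi : PP x k i
  · simp only [hi, not_true, if_false, add_zero]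
    refine Finset.sum_congr rfl fun j _ => ?_
    by_cases hj : PP x k j <;> simp [FF, hi, hj]
  · simp only [hi, not_false_eq_true, if_true]
    rw [← Finset.sum_add_distrib]
    refine Finset.sum_congr rfl fun j _ => ?_
    by_cases hj : PP x k j <;> simp [FF, hi, hj]

lemma sum_pairs {V : Type*} [Fintype V] [LinearOrder V] (g : V → V → ℝ)
    (hs : ∀ i j, g i j = g j i) (hd : ∀ i, g i i = 0) :
    ∑ i, ∑ j, g i j = 2 * ∑ p ∈ pairsLt V, g p.1 p.2 := by
  have h : ∀ i j, g i j = (if i < j then g i j else 0) + (if j < i then g j i else 0) := by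
    intro i j
    rcases lt_trichotomy i j with h | h | h
    · simp [h, h.not_gt]
    · subst h; simp [hd]
    · simp [h, h.not_gt, hs i j]
  have h2 : ∑ i, ∑ j, g i j = ∑ i, ∑ j, ((if i < j then g i j else 0) + (if j < i then g j i else 0)) :=
    Finset.sum_congr rfl fun i _ => Finset.sum_congr rfl fun j _ => h i j
  rw [h2]
  simp only [Finset.sum_add_distrib]
  rw [Finset.sum_comm (f := fun i j => if j < i then g j i else 0), pairsLt, Finset.sum_filter,
    ← Finset.univ_product_univ, Finset.sum_product]
  ring

/-- Rounding the minSTC+ LP relaxation: any feasible fractional solution `x` can be rounded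
to a partition with at most `4` times the LP objective many disagreements. -/
theorem stmt1 {V : Type*} [Fintype V] [LinearOrder V]
    (G : SimpleGraph V) [DecidableRel G.Adj]
    (x : V → V → ℝ) (hsym : ∀ i j, x i j = x j i)
    (h01 : ∀ i j, i ≠ j → 0 ≤ x i j ∧ x i j ≤ 1)
    (hwedge : ∀ i j k : V, IsOpenWedge G i j k → x i j ≤ x i k + x j k) :
    ∃ C : V → ℕ,
      (disagreements G C : ℝ)
        ≤ 4 * ∑ p ∈ pairsLt V,
            (if G.Adj p.1 p.2 then x p.1 p.2 else 1 - x p.1 p.2) := by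
  obtain ⟨C, hC⟩ := pivot_main G x hsym h01 hwedge Finset.univ
  refine ⟨C, ?_⟩
  rw [sum_pairs] at hC
  · have hle : ∑ p ∈ pairsLt V, (4 * cc G x p.1 p.2 - mm G (C p.1 = C p.2) p.1 p.2)
        = 4 * ∑ p ∈ pairsLt V, (if G.Adj p.1 p.2 then x p.1 p.2 else 1 - x p.1 p.2)
          - (disagreements G C : ℝ) := by
      rw [disagreements, Finset.card_filter, Finset.mul_sum]
      push_cast
      rw [← Finset.sum_sub_distrib]
      refine Finset.sum_congr rfl fun p hp => ?_
      have hp' : p.1 ≠ p.2 := ne_of_lt (by simpa [pairsLt] using hp)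
      simp only [cc, mm, hp', if_false]
      congr
    linarith
  · intro i j
    simp only [cc, mm]
    rw [hsym i j, G.adj_comm i j, eq_comm (a := i), eq_comm (a := C i)]
  · intro i
    simp [cc, mm]
end

section
/- Let G = (V,E) be a finite simple graph and let z assign to each edge e ∈ E a real number z_e ∈ [0,1] such that z_{ik} + z_{jk} ≥ 1 for every open wedge (i,j,k) centered at k. Then there exists a partition of V into cliques of G whose number of cut edges is at most 4·∑_{e ∈ E} z_e. -/
open Finset

/-- `C` is a partition of the vertex set into cliques of `G`. -/
def IsCliquePartition {V : Type*} (G : SimpleGraph V) (C : V → ℕ) : Prop :=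
  ∀ i j, i ≠ j → C i = C j → G.Adj i j

/-- The number of cut edges of a partition `C`: edges of `G` whose endpoints lie in
different parts. -/
def cutEdges {V : Type*} [Fintype V] [LinearOrder V]
    (G : SimpleGraph V) [DecidableRel G.Adj] (C : V → ℕ) : ℕ :=
  ((pairsLt V).filter fun p => G.Adj p.1 p.2 ∧ C p.1 ≠ C p.2).card

theorem pivot_aux {V : Type*} [DecidableEq V] (H : V → V → Prop) [DecidableRel H]
    (hs : ∀ i j, H i j → H j i) (n : ℕ) :
    ∀ S : Finset V, S.card ≤ n → ∃ C : V → ℕ,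
      (∀ i ∈ S, ∀ j ∈ S, C i = C j → i ≠ j → ∃ k, (k = i ∨ H k i) ∧ (k = j ∨ H k j)) ∧
      (∑ i ∈ S, ∑ j ∈ S, if H i j ∧ C i ≠ C j then (1:ℕ) else 0)
        ≤ 2 * ∑ i ∈ S, ∑ j ∈ S, if ¬ H i j ∧ i ≠ j ∧ C i = C j then (1:ℕ) else 0 := by
  induction n with
  | zero =>
    intro S hS
    have : S = ∅ := by simpa using hS
    subst this
    exact ⟨fun _ => 0, by simp, by simp⟩
  | succ n ih =>
    intro S hS
    rcases S.eq_empty_or_nonempty with rfl | hne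
    · exact ⟨fun _ => 0, by simp, by simp⟩
    have hW : (∑ k ∈ S, ∑ i ∈ S, ∑ j ∈ S,
          if H k i ∧ H i j ∧ ¬ H k j ∧ k ≠ j then (1:ℕ) else 0)
        = ∑ k ∈ S, ∑ i ∈ S, ∑ j ∈ S,
          if H k i ∧ H k j ∧ ¬ H i j ∧ i ≠ j then (1:ℕ) else 0 := by
      rw [Finset.sum_comm]
      refine Finset.sum_congr rfl fun k _ => Finset.sum_congr rfl fun i _ =>
        Finset.sum_congr rfl fun j _ => ?_
      have := hs k i
      have := hs i k
      refine if_congr (by tauto) rfl rfl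
    obtain ⟨k, hk, hle⟩ := Finset.exists_le_of_sum_le hne hW.le
    obtain ⟨C, hC, hcut⟩ := ih (S.filter fun i => ¬ (i = k ∨ H k i)) (by
      have : (S.filter fun i => ¬ (i = k ∨ H k i)).card < S.card :=
        Finset.card_lt_card (Finset.filter_ssubset.2 ⟨k, hk, by simp⟩)
      omega)
    refine ⟨fun i => if i = k ∨ H k i then 0 else C i + 1, ?_, ?_⟩
    · intro i hi j hj hij hne
      by_cases h1 : i = k ∨ H k i <;> by_cases h2 : j = k ∨ H k j
      · exact ⟨k, by tauto, by tauto⟩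
      · simp [h1, h2] at hij
      · simp [h1, h2] at hij
      · simp only [h1, h2, if_false] at hij
        exact hC i (by simp [hi]; tauto) j (by simp [hj]; tauto) (by omega) hne
    · have conv : ∀ f : V → V → ℕ,
          (∑ i ∈ S.filter (fun i => ¬ (i = k ∨ H k i)),
            ∑ j ∈ S.filter (fun i => ¬ (i = k ∨ H k i)), f i j)
          = ∑ i ∈ S, ∑ j ∈ S,
            if ¬ (i = k ∨ H k i) ∧ ¬ (j = k ∨ H k j) then f i j else 0 := by
        intro f
        rw [Finset.sum_filter]
        refine Finset.sum_congr rfl fun i _ => ?_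
        rw [Finset.sum_filter]
        by_cases h : i = k ∨ H k i <;> simp [h]
      rw [conv, conv] at hcut
      have hsw : (∑ i ∈ S, ∑ j ∈ S, if H k i ∧ H i j ∧ ¬ H k j ∧ k ≠ j then (1:ℕ) else 0)
        = ∑ i ∈ S, ∑ j ∈ S, if H k j ∧ H j i ∧ ¬ H k i ∧ k ≠ i then (1:ℕ) else 0 :=
        Finset.sum_comm
      have h1 : (∑ i ∈ S, ∑ j ∈ S, if H i j ∧ (if i = k ∨ H k i then 0 else C i + 1) ≠
            (if j = k ∨ H k j then 0 else C j + 1) then (1:ℕ) else 0)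
          ≤ (∑ i ∈ S, ∑ j ∈ S, if ¬ (i = k ∨ H k i) ∧ ¬ (j = k ∨ H k j) then
              (if H i j ∧ C i ≠ C j then (1:ℕ) else 0) else 0)
            + (∑ i ∈ S, ∑ j ∈ S, if H k i ∧ H i j ∧ ¬ H k j ∧ k ≠ j then (1:ℕ) else 0)
            + ∑ i ∈ S, ∑ j ∈ S, if H k j ∧ H j i ∧ ¬ H k i ∧ k ≠ i then (1:ℕ) else 0 := by
        simp only [← Finset.sum_add_distrib]
        refine Finset.sum_le_sum fun i _ => Finset.sum_le_sum fun j _ => ?_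
        have := hs i j
        grind
      have h2 : (∑ i ∈ S, ∑ j ∈ S, if ¬ (i = k ∨ H k i) ∧ ¬ (j = k ∨ H k j) then
              (if ¬ H i j ∧ i ≠ j ∧ C i = C j then (1:ℕ) else 0) else 0)
            + (∑ i ∈ S, ∑ j ∈ S, if H k i ∧ H k j ∧ ¬ H i j ∧ i ≠ j then (1:ℕ) else 0)
          ≤ ∑ i ∈ S, ∑ j ∈ S, if ¬ H i j ∧ i ≠ j ∧ (if i = k ∨ H k i then 0 else C i + 1) =
            (if j = k ∨ H k j then 0 else C j + 1) then (1:ℕ) else 0 := by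
        simp only [← Finset.sum_add_distrib]
        refine Finset.sum_le_sum fun i _ => Finset.sum_le_sum fun j _ => ?_
        grind
      beta_reduce
      omega

theorem pairs_sum {V : Type*} [Fintype V] [LinearOrder V] (f : V → V → ℝ)
    (hf : ∀ i j, f i j = f j i) (h0 : ∀ i, f i i = 0) :
    ∑ i, ∑ j, f i j = 2 * ∑ p ∈ pairsLt V, f p.1 p.2 := by
  have e : ∑ p ∈ pairsLt V, f p.1 p.2 = ∑ i, ∑ j, if i < j then f i j else 0 := by
    rw [pairsLt, Finset.sum_filter, Fintype.sum_prod_type]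
  have e2 : (∑ i, ∑ j, if i < j then f i j else 0) = ∑ i, ∑ j, if j < i then f i j else 0 := by
    rw [Finset.sum_comm]
    refine Finset.sum_congr rfl fun i _ => Finset.sum_congr rfl fun j _ => ?_
    rw [hf]
  rw [e, two_mul]
  nth_rewrite 2 [e2]
  simp only [← Finset.sum_add_distrib]
  refine Finset.sum_congr rfl fun i _ => Finset.sum_congr rfl fun j _ => ?_
  rcases lt_trichotomy i j with h | h | h
  · simp [h, h.le]
  · subst h; simp [h0]
  · simp [h, h.le]

/-- Rounding the minSTC LP relaxation: any feasible fractional solution `z` can be rounded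
into a clique partition with at most `4 ∑_e z_e` cut edges. -/
theorem stmt2 {V : Type*} [Fintype V] [LinearOrder V]
    (G : SimpleGraph V) [DecidableRel G.Adj]
    (z : V → V → ℝ) (hsym : ∀ i j, z i j = z j i)
    (h01 : ∀ i j, G.Adj i j → 0 ≤ z i j ∧ z i j ≤ 1)
    (hwedge : ∀ i j k : V, IsOpenWedge G i j k → 1 ≤ z i k + z j k) :
    ∃ C : V → ℕ, IsCliquePartition G C ∧
      (cutEdges G C : ℝ)
        ≤ 4 * ∑ p ∈ (pairsLt V).filter (fun p => G.Adj p.1 p.2), z p.1 p.2 := by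
  classical
  obtain ⟨C, hC, hcut⟩ := pivot_aux (fun i j => G.Adj i j ∧ z i j < 1/2)
    (fun i j h => ⟨h.1.symm, by rw [hsym]; exact h.2⟩) _ (Finset.univ : Finset V) le_rfl
  have hcl : IsCliquePartition G C := by
    intro i j hne hij
    obtain ⟨k, h1, h2⟩ := hC i (mem_univ _) j (mem_univ _) hij hne
    rcases h1 with rfl | h1 <;> rcases h2 with rfl | h2
    · exact absurd rfl hne
    · exact h2.1
    · exact h1.1.symm
    · by_contra hn
      have := hwedge i j k ⟨h1.1.symm, h2.1.symm, hne, hn⟩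
      rw [hsym i k, hsym j k] at this
      linarith [h1.2, h2.2]
  refine ⟨C, hcl, ?_⟩
  have hZ := pairs_sum (fun i j => if G.Adj i j then z i j else 0)
    (fun i j => by simp only [G.adj_comm i j, hsym i j]) (by simp)
  have hK := pairs_sum (fun i j => if G.Adj i j ∧ C i ≠ C j then (1:ℝ) else 0)
    (fun i j => by simp only [G.adj_comm i j, ne_comm]) (by simp)
  have hK' : (cutEdges G C : ℝ)
      = ∑ p ∈ pairsLt V, if G.Adj p.1 p.2 ∧ C p.1 ≠ C p.2 then (1:ℝ) else 0 := by
    rw [cutEdges, Finset.sum_boole]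
  rw [Finset.sum_filter, hK']
  have hcut' : (∑ i, ∑ j, if (G.Adj i j ∧ z i j < 1/2) ∧ C i ≠ C j then (1:ℝ) else 0)
        ≤ 2 * ∑ i, ∑ j, if ¬ (G.Adj i j ∧ z i j < 1/2) ∧ i ≠ j ∧ C i = C j
          then (1:ℝ) else 0 := by
    exact_mod_cast hcut
  have a1 : (∑ i, ∑ j, if G.Adj i j ∧ C i ≠ C j then (1:ℝ) else 0)
      + (∑ i, ∑ j, if ¬ (G.Adj i j ∧ z i j < 1/2) ∧ i ≠ j ∧ C i = C j then (1:ℝ) else 0)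
      ≤ (∑ i, ∑ j, if (G.Adj i j ∧ z i j < 1/2) ∧ C i ≠ C j then (1:ℝ) else 0)
      + ∑ i, ∑ j, if G.Adj i j ∧ ¬ z i j < 1/2 then (1:ℝ) else 0 := by
    simp only [← Finset.sum_add_distrib]
    refine Finset.sum_le_sum fun i _ => Finset.sum_le_sum fun j _ => ?_
    have := hcl i j
    clear hC hcut hcut' hZ hK hK' hcl hwedge hsym h01
    split_ifs <;> first | (exfalso; tauto) | norm_num
  have a2 : (∑ i, ∑ j, if ¬ (G.Adj i j ∧ z i j < 1/2) ∧ i ≠ j ∧ C i = C j then (1:ℝ) else 0)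
      ≤ ∑ i, ∑ j, if G.Adj i j ∧ ¬ z i j < 1/2 then (1:ℝ) else 0 := by
    refine Finset.sum_le_sum fun i _ => Finset.sum_le_sum fun j _ => ?_
    have := hcl i j
    clear hC hcut hcut' hZ hK hK' hcl hwedge hsym h01
    split_ifs <;> first | (exfalso; tauto) | norm_num
  have a3 : (∑ i, ∑ j, if G.Adj i j ∧ ¬ z i j < 1/2 then (1:ℝ) else 0)
      ≤ 2 * ∑ i, ∑ j, if G.Adj i j then z i j else 0 := by
    simp only [Finset.mul_sum]
    refine Finset.sum_le_sum fun i _ => Finset.sum_le_sum fun j _ => ?_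
    have := h01 i j
    split_ifs with q1 q2 q2
    · linarith [not_lt.1 q1.2]
    · exact absurd q1.1 q2
    · linarith [(this q2).1]
    · simp
  linarith
end

section
/- Let G = (V,E) be a finite simple graph and let (E', E_W) be an STC+ labeling of G, i.e., E' is a set of non-edge pairs of G, E_W ⊆ E, and for every open wedge (i,j,k) centered at k at least one of {i,k} ∈ E_W, {j,k} ∈ E_W, or {i,j} ∈ E' holds. Then there exists a partition of V whose number of disagreements with respect to G is at most 2·(|E'| + |E_W|). -/
open Finset

open Classical in
/-- Indicator of a proposition. -/
noncomputable def auxInd (P : Prop) : ℤ := if P then 1 else 0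

theorem auxInd_pos {P : Prop} (h : P) : auxInd P = 1 := by simp [auxInd, h]

theorem auxInd_neg {P : Prop} (h : ¬ P) : auxInd P = 0 := by simp [auxInd, h]

theorem auxInd_true : auxInd True = 1 := by simp [auxInd]

theorem auxInd_false : auxInd False = 0 := by simp [auxInd]

/-- Cost of a clustering on an ordered pair. -/
noncomputable def auxCost {V : Type*} (A : V → V → Prop) (C : V → ℕ) (u v : V) : ℤ :=
  auxInd (u ≠ v ∧ ((A u v ∧ C u ≠ C v) ∨ (¬ A u v ∧ C u = C v)))

/-- Budget of an ordered pair. -/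
noncomputable def auxBud {V : Type*} (F : V → V → Prop) (u v : V) : ℤ :=
  auxInd (F u v)

/-- Pivot cluster membership. -/
def auxIn {V : Type*} (A F : V → V → Prop) (k v : V) : Prop := v = k ∨ ¬ (A k v ↔ F k v)

/-- Cost of a pair when `k` is the pivot. -/
noncomputable def auxPay {V : Type*} (A F : V → V → Prop) (k u v : V) : ℤ :=
  auxInd (u ≠ v ∧ (auxIn A F k u ∨ auxIn A F k v) ∧
    ((A u v ∧ ¬ (auxIn A F k u ↔ auxIn A F k v)) ∨
      (¬ A u v ∧ (auxIn A F k u ∧ auxIn A F k v))))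

/-- Budget of a pair removed by the pivot `k`. -/
noncomputable def auxRem {V : Type*} (A F : V → V → Prop) (k u v : V) : ℤ :=
  auxInd ((auxIn A F k u ∨ auxIn A F k v) ∧ F u v)

theorem aux_tri {V : Type*} (A F : V → V → Prop)
    (As : ∀ u v, A u v ↔ A v u) (Fs : ∀ u v, F u v ↔ F v u)
    (Ai : ∀ u, ¬ A u u) (Fi : ∀ u, ¬ F u u)
    (hw : ∀ i j k, A i k → A j k → i ≠ j → ¬ A i j → F i k ∨ F j k ∨ F i j) (k u v : V) :
    0 ≤ (2 * auxRem A F k u v - auxPay A F k u v) + (2 * auxRem A F u v k - auxPay A F u v k)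
      + (2 * auxRem A F v k u - auxPay A F v k u) := by
  unfold auxRem auxPay auxIn
  have h1 := hw k u v
  have h2 := hw u v k
  have h3 := hw v k u
  simp only [As v k, As u k, Fs v k, Fs u k, As v u, Fs v u] at h1 h2 h3 ⊢
  have a1 := Ai k
  have a2 := Ai u
  have a3 := Ai v
  have b1 := Fi k
  have b2 := Fi u
  have b3 := Fi v
  have s1 := As u k
  have s2 := As v k
  have s3 := As v u
  have s4 := Fs u k
  have s5 := Fs v k
  have s6 := Fs v u
  clear hw As Fs Ai Fi
  by_cases e1 : k = u
  · subst e1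
    by_cases e2 : k = v
    · subst e2; simp [a1, b1, auxInd_true, auxInd_false]
    · have e2' := Ne.symm e2
      by_cases A k v <;> by_cases F k v <;> simp_all [auxInd_true, auxInd_false]
  have e1' := Ne.symm e1
  by_cases e2 : k = v
  · subst e2
    by_cases A k u <;> by_cases F k u <;> simp_all [auxInd_true, auxInd_false]
  by_cases e3 : u = v
  · subst e3
    by_cases A k u <;> by_cases F k u <;> simp_all [auxInd_true, auxInd_false]
  have e2' := Ne.symm e2
  have e3' := Ne.symm e3
  by_cases A k u <;> by_cases F k u <;> by_cases A k v <;> by_cases F k v <;>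
    by_cases A u v <;> by_cases F u v <;> simp_all [auxInd_true, auxInd_false]

theorem aux_core {V : Type*} (A F : V → V → Prop)
    (As : ∀ u v, A u v ↔ A v u) (Fs : ∀ u v, F u v ↔ F v u)
    (Ai : ∀ u, ¬ A u u) (Fi : ∀ u, ¬ F u u)
    (hw : ∀ i j k, A i k → A j k → i ≠ j → ¬ A i j → F i k ∨ F j k ∨ F i j) (S : Finset V) :
    ∃ C : V → ℕ, ∑ u ∈ S, ∑ v ∈ S, auxCost A C u v ≤ 2 * ∑ u ∈ S, ∑ v ∈ S, auxBud F u v := by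
  classical
  induction S using Finset.strongInduction with
  | H S ih =>
  rcases S.eq_empty_or_nonempty with rfl | hS
  · exact ⟨fun _ => 0, by simp⟩
  set g : V → V → V → ℤ := fun k u v => 2 * auxRem A F k u v - auxPay A F k u v with hg
  have hsum : 0 ≤ ∑ k ∈ S, ∑ u ∈ S, ∑ v ∈ S, g k u v := by
    have h2 : ∑ k ∈ S, ∑ u ∈ S, ∑ v ∈ S, g v k u = ∑ k ∈ S, ∑ u ∈ S, ∑ v ∈ S, g k u v := by
      rw [Finset.sum_comm' (s := S) (t' := S) (t := fun _ => S) (s' := fun _ => S) (by simp)]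
      rw [Finset.sum_congr rfl fun _ _ => Finset.sum_comm]
      rw [Finset.sum_comm]
      exact Finset.sum_congr rfl fun _ _ => Finset.sum_comm
    have h1 : ∑ k ∈ S, ∑ u ∈ S, ∑ v ∈ S, g u v k = ∑ k ∈ S, ∑ u ∈ S, ∑ v ∈ S, g k u v := by
      rw [Finset.sum_comm]
      exact Finset.sum_congr rfl fun _ _ => Finset.sum_comm
    have h3 : 0 ≤ ∑ k ∈ S, ∑ u ∈ S, ∑ v ∈ S, (g k u v + g u v k + g v k u) :=
      Finset.sum_nonneg fun k _ => Finset.sum_nonneg fun u _ => Finset.sum_nonneg fun v _ =>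
        aux_tri A F As Fs Ai Fi hw k u v
    simp only [Finset.sum_add_distrib] at h3
    rw [h1, h2] at h3
    linarith
  obtain ⟨k, hk, hgk⟩ : ∃ k ∈ S, 0 ≤ ∑ u ∈ S, ∑ v ∈ S, g k u v := by
    by_contra! h
    exact absurd (Finset.sum_lt_sum_of_nonempty hS h) (by simpa using hsum)
  obtain ⟨C', hC'⟩ := ih (S.filter fun v => ¬ auxIn A F k v)
    (Finset.filter_ssubset.2 ⟨k, hk, by simp [auxIn]⟩)
  refine ⟨fun v => if auxIn A F k v then 0 else C' v + 1, ?_⟩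
  simp only [Finset.sum_filter] at hC'
  have e1 : ∑ u ∈ S, ∑ v ∈ S, auxCost A (fun v => if auxIn A F k v then 0 else C' v + 1) u v
      = (∑ u ∈ S, if ¬ auxIn A F k u then
          (∑ v ∈ S, if ¬ auxIn A F k v then auxCost A C' u v else 0) else 0)
        + ∑ u ∈ S, ∑ v ∈ S, auxPay A F k u v := by
    rw [← Finset.sum_add_distrib]
    refine Finset.sum_congr rfl fun u _ => ?_
    by_cases hu : auxIn A F k u
    · simp only [hu, not_true, if_false, zero_add]
      refine Finset.sum_congr rfl fun v _ => ?_
      by_cases hv : auxIn A F k v <;> simp [auxCost, auxPay, hu, hv, auxInd_true, auxInd_false]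
    · simp only [hu, not_false_eq_true, if_true]
      rw [← Finset.sum_add_distrib]
      refine Finset.sum_congr rfl fun v _ => ?_
      by_cases hv : auxIn A F k v <;> simp [auxCost, auxPay, hu, hv, auxInd_true, auxInd_false]
  have e2 : ∑ u ∈ S, ∑ v ∈ S, auxBud F u v
      = (∑ u ∈ S, if ¬ auxIn A F k u then
          (∑ v ∈ S, if ¬ auxIn A F k v then auxBud F u v else 0) else 0)
        + ∑ u ∈ S, ∑ v ∈ S, auxRem A F k u v := by
    rw [← Finset.sum_add_distrib]
    refine Finset.sum_congr rfl fun u _ => ?_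
    by_cases hu : auxIn A F k u
    · simp only [hu, not_true, if_false, zero_add]
      refine Finset.sum_congr rfl fun v _ => ?_
      simp [auxBud, auxRem, hu]
    · simp only [hu, not_false_eq_true, if_true]
      rw [← Finset.sum_add_distrib]
      refine Finset.sum_congr rfl fun v _ => ?_
      by_cases hv : auxIn A F k v <;> simp [auxBud, auxRem, hu, hv, auxInd_true, auxInd_false]
  simp only [hg, Finset.sum_sub_distrib, ← Finset.mul_sum] at hgk
  rw [e1, e2]
  linarith

theorem aux_pairs {V : Type*} [Fintype V] [LinearOrder V] (f : V → V → ℤ)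
    (fs : ∀ u v, f u v = f v u) (fd : ∀ u, f u u = 0) :
    ∑ u, ∑ v, f u v = 2 * ∑ p ∈ pairsLt V, f p.1 p.2 := by
  have h : ∑ p ∈ pairsLt V, f p.1 p.2 = ∑ u, ∑ v, if u < v then f u v else 0 := by
    rw [pairsLt, Finset.sum_filter, Fintype.sum_prod_type]
  have h' : ∑ u, ∑ v, (if u < v then f u v else 0) = ∑ u, ∑ v, if v < u then f u v else 0 := by
    rw [Finset.sum_comm]
    exact Finset.sum_congr rfl fun u _ => Finset.sum_congr rfl fun v _ => by rw [fs]
  rw [h, two_mul]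
  nth_rewrite 2 [h']
  simp only [← Finset.sum_add_distrib]
  refine Finset.sum_congr rfl fun u _ => Finset.sum_congr rfl fun v _ => ?_
  rcases lt_trichotomy u v with h | h | h
  · simp [h, h.not_gt]
  · subst h; simp [fd]
  · simp [h, h.not_gt]

/-- Theorem: any STC+ labeling `(E', E_W)` of `G` can be rounded into a partition of the
vertices with at most `2 (|E'| + |E_W|)` disagreements. -/
theorem stmt3 {V : Type*} [Fintype V] [LinearOrder V]
    (G : SimpleGraph V) [DecidableRel G.Adj]
    (E' EW : Finset (Sym2 V))
    (hE' : ∀ e ∈ E', ¬ e.IsDiag ∧ e ∉ G.edgeSet)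
    (hEW : ∀ e ∈ EW, e ∈ G.edgeSet)
    (hlabel : ∀ i j k : V, IsOpenWedge G i j k →
      s(i, k) ∈ EW ∨ s(j, k) ∈ EW ∨ s(i, j) ∈ E') :
    ∃ C : V → ℕ, disagreements G C ≤ 2 * (E'.card + EW.card) := by
  classical
  set F : V → V → Prop := fun u v => s(u, v) ∈ E' ∪ EW with hF
  have Fi : ∀ u, ¬ F u u := by
    intro u hu
    rcases Finset.mem_union.1 hu with h | h
    · exact (hE' _ h).1 (by simp)
    · have := hEW _ h
      simp at this
  have Fs : ∀ u v, F u v ↔ F v u := fun u v => by simp only [hF]; rw [Sym2.eq_swap]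
  have hw : ∀ i j k, G.Adj i k → G.Adj j k → i ≠ j → ¬ G.Adj i j → F i k ∨ F j k ∨ F i j := by
    intro i j k h1 h2 h3 h4
    have := hlabel i j k ⟨h1, h2, h3, h4⟩
    simp only [hF, Finset.mem_union]
    tauto
  obtain ⟨C, hC⟩ := aux_core G.Adj F (fun u v => G.adj_comm u v) Fs (fun u => G.irrefl) Fi hw
    Finset.univ
  refine ⟨C, ?_⟩
  rw [aux_pairs (auxCost G.Adj C), aux_pairs (auxBud F)] at hC
  · have h1 : (disagreements G C : ℤ) = ∑ p ∈ pairsLt V, auxCost G.Adj C p.1 p.2 := by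
      rw [disagreements, Finset.card_filter, Nat.cast_sum]
      refine Finset.sum_congr rfl fun p hp => ?_
      have hp' : p.1 ≠ p.2 := ne_of_lt (by simpa [pairsLt] using hp)
      simp [auxCost, auxInd, hp']
    have h2 : ∑ p ∈ pairsLt V, auxBud F p.1 p.2 ≤ ((E' ∪ EW).card : ℤ) := by
      have h0 : ∑ p ∈ pairsLt V, auxBud F p.1 p.2
          = (((pairsLt V).filter fun p => F p.1 p.2).card : ℤ) := by
        rw [Finset.card_filter, Nat.cast_sum]
        refine Finset.sum_congr rfl fun p _ => ?_
        by_cases h : F p.1 p.2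
        · rw [auxBud, auxInd_pos h, if_pos h, Nat.cast_one]
        · rw [auxBud, auxInd_neg h, if_neg h, Nat.cast_zero]
      rw [h0, Nat.cast_le]
      refine Finset.card_le_card_of_injOn (fun p => s(p.1, p.2)) ?_ ?_
      · intro p hp
        exact (Finset.mem_filter.1 hp).2
      · rintro ⟨a, b⟩ hp ⟨c, d⟩ hq h
        have hp' : a < b := by simpa [pairsLt] using (Finset.mem_filter.1 hp).1
        have hq' : c < d := by simpa [pairsLt] using (Finset.mem_filter.1 hq).1
        rcases Sym2.eq_iff.1 h with ⟨h1, h2⟩ | ⟨h1, h2⟩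
        · simp only at h1 h2
          rw [h1, h2]
        · simp only at h1 h2
          subst h1 h2
          exact absurd hp' hq'.not_gt
    have h3 := Finset.card_union_le E' EW
    have h4 : ((E' ∪ EW).card : ℤ) ≤ E'.card + EW.card := by exact_mod_cast h3
    have : (disagreements G C : ℤ) ≤ 2 * (E'.card + EW.card) := by linarith
    exact_mod_cast this
  · intro u v
    simp [auxBud, Fs u v]
  · intro u
    simp [auxBud, Fi u, auxInd_false]
  · intro u v
    simp only [auxCost, G.adj_comm u v, ne_comm (a := u), eq_comm (a := C u), ne_comm (a := C u)]
  · intro u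
    simp [auxCost, auxInd_false]
end

section
/- Let G = (V,E) be a finite simple graph. Let OPT⁺ be the minimum of |E'| + |E_W| over all STC+ labelings (E', E_W) of G, and let OPT^CE be the minimum number of disagreements over all partitions of V (the optimal cluster editing value). Then OPT⁺ ≤ OPT^CE ≤ 2·OPT⁺. -/
open Finset

/-- `(E', E_W)` is an STC+ labeling of `G`: `E'` consists of non-edge pairs, `E_W` consists
of edges, and every open wedge `(i,j,k)` centered at `k` has `{i,k} ∈ E_W`, `{j,k} ∈ E_W`,
or `{i,j} ∈ E'`. -/
def IsSTCPlusLabeling {V : Type*} (G : SimpleGraph V) (E' EW : Finset (Sym2 V)) : Prop :=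
  (∀ e ∈ E', ¬ e.IsDiag ∧ e ∉ G.edgeSet) ∧ (∀ e ∈ EW, e ∈ G.edgeSet) ∧
    (∀ i j k : V, IsOpenWedge G i j k → s(i, k) ∈ EW ∨ s(j, k) ∈ EW ∨ s(i, j) ∈ E')

section Core
open Classical

noncomputable def flp {V : Type*} (g h : V → V → Prop) (i j : V) : ℤ :=
  if (g i j ↔ h i j) then 0 else 1

def badT {V : Type*} (h : V → V → Prop) (k i j : V) : Prop :=
  k ≠ i ∧ k ≠ j ∧ i ≠ j ∧ ((h k i ∧ h k j ∧ ¬ h i j) ∨ (h k i ∧ ¬ h k j ∧ h i j) ∨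
    (¬ h k i ∧ h k j ∧ h i j))

def nb {V : Type*} (h : V → V → Prop) (k i : V) : Prop := k = i ∨ h k i

noncomputable def rmv {V : Type*} (h : V → V → Prop) (k i j : V) : ℤ :=
  if nb h k i ∨ nb h k j then 1 else 0

noncomputable def cst {V : Type*} (g h : V → V → Prop) (k i j : V) : ℤ :=
  if i ≠ j ∧ ((nb h k i ∧ nb h k j ∧ ¬ g i j) ∨ (¬ (nb h k i ↔ nb h k j) ∧ g i j)) then 1 else 0

noncomputable def dis {V : Type*} (g : V → V → Prop) (C : V → ℕ) (i j : V) : ℤ :=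
  if i ≠ j ∧ ((g i j ∧ C i ≠ C j) ∨ (¬ g i j ∧ C i = C j)) then 1 else 0

noncomputable def wt {V : Type*} (g h : V → V → Prop) (k i j : V) : ℤ :=
  if badT h k i j then 1 - 3 * flp g h i j else 0

lemma cst_le {V : Type*} (g h : V → V → Prop) (hs : ∀ x y, h x y → h y x) (k i j : V) :
    cst g h k i j ≤ 2 * (rmv h k i j * flp g h i j) + wt g h k i j := by
  have h1 := hs i j
  have h2 := hs j i
  unfold cst rmv wt flp badT nb
  by_cases e1 : k = i
  · subst e1
    by_cases e3 : k = j
    · subst e3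
      by_cases a : h k k <;> by_cases d : g k k <;> simp [a, d]
    · by_cases a : h k j <;> by_cases d : g k j <;> by_cases b : h k k <;> simp [a, d, b, e3]
  by_cases e2 : k = j
  · subst e2
    have : h k i ↔ h i k := ⟨hs _ _, hs _ _⟩
    by_cases a : h i k <;> by_cases d : g i k <;> by_cases b : h k k <;> simp [a, d, b, e1, this, Ne.symm e1]
  by_cases e3 : i = j
  · subst e3
    by_cases a : h k i <;> by_cases d : g i i <;> by_cases b : h i i <;> simp [a, d, b, e1]
  by_cases a : h k i <;> by_cases b : h k j <;> by_cases c : h i j <;> by_cases d : g i j <;>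
    simp [a, b, c, d, e1, e2, e3]

lemma wt_cyc {V : Type*} (g h : V → V → Prop) (hs : ∀ x y, h x y → h y x)
    (hw : ∀ i j k, i ≠ j → i ≠ k → j ≠ k → h i k → h j k → ¬ h i j →
      ¬ (g i k ↔ h i k) ∨ ¬ (g j k ↔ h j k) ∨ ¬ (g i j ↔ h i j))
    (gs : ∀ x y, g x y → g y x) (k i j : V) :
    wt g h k i j + wt g h i j k + wt g h j k i ≤ 0 := by
  have s1 : ∀ x y, h x y ↔ h y x := fun x y => ⟨hs _ _, hs _ _⟩
  have s2 : ∀ x y, g x y ↔ g y x := fun x y => ⟨gs _ _, gs _ _⟩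
  by_cases hb : badT h k i j
  · have hb2 : badT h i j k := by
      unfold badT at *; grind
    have hb3 : badT h j k i := by
      unfold badT at *; grind
    have key : ¬ (g i j ↔ h i j) ∨ ¬ (g j k ↔ h j k) ∨ ¬ (g k i ↔ h k i) := by
      have w1 := hw i j k
      have w2 := hw j k i
      have w3 := hw k i j
      unfold badT at hb
      grind
    simp only [wt, hb, hb2, hb3, if_true, flp]
    split_ifs <;> first | omega | (exfalso; tauto)
  · have hb2 : ¬ badT h i j k := by
      unfold badT at *; grind
    have hb3 : ¬ badT h j k i := by
      unfold badT at *; grind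
    simp [wt, hb, hb2, hb3]

lemma wt_sum {V : Type*} (g h : V → V → Prop) (hs : ∀ x y, h x y → h y x)
    (hw : ∀ i j k, i ≠ j → i ≠ k → j ≠ k → h i k → h j k → ¬ h i j →
      ¬ (g i k ↔ h i k) ∨ ¬ (g j k ↔ h j k) ∨ ¬ (g i j ↔ h i j))
    (gs : ∀ x y, g x y → g y x) (S : Finset V) :
    ∑ k ∈ S, ∑ i ∈ S, ∑ j ∈ S, wt g h k i j ≤ 0 := by
  have r : ∀ f : V → V → V → ℤ, ∑ k ∈ S, ∑ i ∈ S, ∑ j ∈ S, f i j k =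
      ∑ k ∈ S, ∑ i ∈ S, ∑ j ∈ S, f k i j := by
    intro f
    rw [Finset.sum_comm]
    apply Finset.sum_congr rfl
    intro i _
    rw [Finset.sum_comm]
  have e1 := r (wt g h)
  have e2 := r (fun k i j => wt g h i j k)
  have : ∑ k ∈ S, ∑ i ∈ S, ∑ j ∈ S, (wt g h k i j + wt g h i j k + wt g h j k i) ≤ 0 :=
    Finset.sum_nonpos fun k _ => Finset.sum_nonpos fun i _ => Finset.sum_nonpos fun j _ =>
      wt_cyc g h hs hw gs k i j
  simp only [Finset.sum_add_distrib] at this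
  linarith

lemma core {V : Type*} (g h : V → V → Prop) (hs : ∀ x y, h x y → h y x)
    (hw : ∀ i j k, i ≠ j → i ≠ k → j ≠ k → h i k → h j k → ¬ h i j →
      ¬ (g i k ↔ h i k) ∨ ¬ (g j k ↔ h j k) ∨ ¬ (g i j ↔ h i j))
    (gs : ∀ x y, g x y → g y x) (n : ℕ) : ∀ (S : Finset V), S.card = n →
    ∃ C : V → ℕ, ∑ i ∈ S, ∑ j ∈ S, dis g C i j ≤ 2 * ∑ i ∈ S, ∑ j ∈ S, flp g h i j := by
  induction n using Nat.strong_induction_on with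
  | _ n ih =>
    intro S hS
    rcases S.eq_empty_or_nonempty with rfl | hne
    · exact ⟨fun _ => 0, by simp⟩
    obtain ⟨k, hk, hle⟩ : ∃ k ∈ S, ∑ i ∈ S, ∑ j ∈ S, cst g h k i j ≤
        ∑ i ∈ S, ∑ j ∈ S, 2 * (rmv h k i j * flp g h i j) := by
      apply Finset.exists_le_of_sum_le hne
      have h1 : ∑ k ∈ S, ∑ i ∈ S, ∑ j ∈ S, cst g h k i j ≤ ∑ k ∈ S, ∑ i ∈ S, ∑ j ∈ S,
          (2 * (rmv h k i j * flp g h i j) + wt g h k i j) :=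
        Finset.sum_le_sum fun k _ => Finset.sum_le_sum fun i _ => Finset.sum_le_sum fun j _ =>
          cst_le g h hs k i j
      simp only [Finset.sum_add_distrib] at h1
      have h2 := wt_sum g h hs hw gs S
      linarith
    set T := S.filter (fun x => ¬ nb h k x) with hT
    have hlt : T.card < n := by
      rw [← hS]
      apply Finset.card_lt_card
      refine Finset.filter_ssubset.2 ⟨k, hk, ?_⟩
      simp [nb]
    obtain ⟨C, hC⟩ := ih _ hlt T rfl
    have hTs : ∀ f : V → V → ℤ, ∑ i ∈ T, ∑ j ∈ T, f i j =
        ∑ i ∈ S, ∑ j ∈ S, (1 - rmv h k i j) * f i j := by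
      intro f
      rw [hT, Finset.sum_filter]
      apply Finset.sum_congr rfl
      intro i _
      rw [Finset.sum_filter]
      by_cases a : nb h k i
      · simp [a, rmv]
      · simp only [a, not_false_eq_true, if_true]
        apply Finset.sum_congr rfl
        intro j _
        by_cases b : nb h k j <;> simp [a, b, rmv]
    refine ⟨fun x => if nb h k x then 0 else C x + 1, ?_⟩
    have hd : ∀ i j, dis g (fun x => if nb h k x then 0 else C x + 1) i j =
        cst g h k i j + (1 - rmv h k i j) * dis g C i j := by
      intro i j
      by_cases a : nb h k i <;> by_cases b : nb h k j <;> simp [dis, cst, rmv, a, b]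
    simp only [hd, Finset.sum_add_distrib]
    rw [hTs, hTs] at hC
    simp only [← Finset.mul_sum] at hle
    simp only [sub_mul, one_mul, Finset.sum_sub_distrib] at hC ⊢
    linarith

lemma sum_symm {V : Type*} [Fintype V] [LinearOrder V] (f : V → V → ℤ)
    (hs : ∀ i j, f i j = f j i) (h0 : ∀ i, f i i = 0) :
    ∑ i, ∑ j, f i j = 2 * ∑ p ∈ pairsLt V, f p.1 p.2 := by
  have e : ∑ p ∈ pairsLt V, f p.1 p.2 = ∑ i, ∑ j, if i < j then f i j else 0 := by
    rw [pairsLt, Finset.sum_filter, Fintype.sum_prod_type]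
  have e2 : ∑ i, ∑ j, (if i < j then f i j else 0) = ∑ i, ∑ j, if j < i then f i j else 0 := by
    rw [Finset.sum_comm]
    simp only [hs]
  have e3 : ∑ i, ∑ j, f i j = ∑ i, ∑ j, ((if i < j then f i j else 0) + if j < i then f i j else 0) := by
    refine Finset.sum_congr rfl fun i _ => Finset.sum_congr rfl fun j _ => ?_
    rcases lt_trichotomy i j with a | a | a
    · simp [a, a.not_gt]
    · subst a; simp [h0]
    · simp [a, a.not_gt]
  rw [e3]
  simp only [Finset.sum_add_distrib]
  rw [← e2, e]; ring

end Core

lemma mk_inj_on {V : Type*} [Fintype V] [LinearOrder V] (p q : V × V) (hp : p ∈ pairsLt V)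
    (hq : q ∈ pairsLt V) (h : s(p.1, p.2) = s(q.1, q.2)) : p = q := by
  simp only [pairsLt, Finset.mem_filter, Finset.mem_univ, true_and] at hp hq
  rw [Sym2.eq_iff] at h
  rcases h with ⟨a, b⟩ | ⟨a, b⟩
  · exact Prod.ext a b
  · rw [a, b] at hp
    exact absurd hp hq.not_gt

lemma upper {V : Type*} [Fintype V] [LinearOrder V]
    (G : SimpleGraph V) [DecidableRel G.Adj] (E' EW : Finset (Sym2 V))
    (hL : IsSTCPlusLabeling G E' EW) :
    ∃ C : V → ℕ, disagreements G C ≤ 2 * (E'.card + EW.card) := by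
  classical
  obtain ⟨l1, l2, l3⟩ := hL
  let h : V → V → Prop := fun x y => (G.Adj x y ∧ s(x, y) ∉ EW) ∨ s(x, y) ∈ E'
  have hs : ∀ x y, h x y → h y x := by
    intro x y
    simp only [h]
    rw [Sym2.eq_swap, G.adj_comm]
    exact id
  have hf : ∀ x y, ¬ (G.Adj x y ↔ h x y) → s(x, y) ∈ E' ∪ EW := by
    intro x y hh
    simp only [h] at hh
    rw [Finset.mem_union]
    tauto
  have hf2 : ∀ x y, s(x, y) ∈ EW → ¬ h x y := by
    intro x y a b
    rcases b with b | b
    · exact b.2 a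
    · exact (l1 _ b).2 (l2 _ a)
  have hf3 : ∀ x y, s(x, y) ∈ E' → ¬ G.Adj x y := fun x y a b => (l1 _ a).2 b
  obtain ⟨C, hC⟩ := core G.Adj h hs (by
    intro i j k n1 n2 n3 a b c
    by_contra hcon
    push Not at hcon
    obtain ⟨c1, c2, c3⟩ := hcon
    rcases l3 i j k ⟨c1.2 a, c2.2 b, n1, fun x => c (c3.1 x)⟩ with d | d | d
    · exact hf2 _ _ d a
    · exact hf2 _ _ d b
    · exact c (Or.inr d)) (fun x y a => a.symm) _ Finset.univ rfl
  refine ⟨C, ?_⟩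
  rw [sum_symm, sum_symm] at hC
  · have a1 : ∑ p ∈ pairsLt V, dis G.Adj C p.1 p.2 = (disagreements G C : ℤ) := by
      rw [disagreements, Finset.card_filter]
      push_cast
      refine Finset.sum_congr rfl fun p hp => ?_
      have : p.1 ≠ p.2 := by
        simp only [pairsLt, Finset.mem_filter] at hp
        exact hp.2.ne
      simp [dis, this]
    have a2 : ∑ p ∈ pairsLt V, flp G.Adj h p.1 p.2 ≤ ((E'.card + EW.card : ℕ) : ℤ) := by
      have : ∑ p ∈ pairsLt V, flp G.Adj h p.1 p.2 =
          (((pairsLt V).filter fun p => ¬ (G.Adj p.1 p.2 ↔ h p.1 p.2)).card : ℤ) := by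
        rw [Finset.card_filter]
        push_cast
        refine Finset.sum_congr rfl fun p hp => ?_
        by_cases q : (G.Adj p.1 p.2 ↔ h p.1 p.2) <;> simp [flp, q]
      rw [this]
      norm_cast
      refine le_trans ?_ (Finset.card_union_le E' EW)
      apply Finset.card_le_card_of_injOn (fun p => s(p.1, p.2))
      · intro p hp
        simp only [Finset.coe_filter, Set.mem_ofPred_eq] at hp
        exact hf _ _ hp.2
      · intro p hp q hq e
        simp only [Finset.coe_filter, Set.mem_ofPred_eq] at hp hq
        exact mk_inj_on p q hp.1 hq.1 e
    rw [a1] at hC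
    have : (disagreements G C : ℤ) ≤ ((2 * (E'.card + EW.card) : ℕ) : ℤ) := by
      push_cast at a2 ⊢
      linarith
    exact_mod_cast this
  · intro i j
    have : h i j ↔ h j i := ⟨hs _ _, hs _ _⟩
    simp only [flp, this, G.adj_comm i j]
    congr
  · intro i
    have : ¬ h i i := by
      rintro (a | a)
      · exact G.irrefl a.1
      · exact (l1 _ a).1 rfl
    simp [flp, this]
  · intro i j
    simp only [dis, G.adj_comm i j, ne_comm (a := i), ne_comm (a := C i), eq_comm (a := C i)]
    congr
  · intro i
    simp [dis]

lemma lower {V : Type*} [Fintype V] [LinearOrder V]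
    (G : SimpleGraph V) [DecidableRel G.Adj] (C : V → ℕ) :
    ∃ E' EW : Finset (Sym2 V), IsSTCPlusLabeling G E' EW ∧
      E'.card + EW.card ≤ disagreements G C := by
  classical
  have mem : ∀ (P : V → V → Prop), (∀ x y, P x y → P y x) → ∀ x y, x ≠ y → P x y →
      s(x, y) ∈ ((pairsLt V).filter fun p => P p.1 p.2).image (fun p => s(p.1, p.2)) := by
    intro P hP x y hne hxy
    rw [Finset.mem_image]
    rcases lt_or_gt_of_ne hne with a | a
    · exact ⟨(x, y), by simp [pairsLt, a, hxy], rfl⟩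
    · exact ⟨(y, x), by simp [pairsLt, a, hP _ _ hxy], Sym2.eq_swap⟩
  refine ⟨((pairsLt V).filter fun p => ¬ G.Adj p.1 p.2 ∧ C p.1 = C p.2).image
      (fun p => s(p.1, p.2)),
    ((pairsLt V).filter fun p => G.Adj p.1 p.2 ∧ C p.1 ≠ C p.2).image
      (fun p => s(p.1, p.2)), ⟨?_, ?_, ?_⟩, ?_⟩
  · intro e he
    obtain ⟨p, hp, rfl⟩ := Finset.mem_image.1 he
    simp only [pairsLt, Finset.mem_filter, Finset.mem_univ, true_and] at hp
    exact ⟨by simpa using hp.1.ne, by simpa using hp.2.1⟩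
  · intro e he
    obtain ⟨p, hp, rfl⟩ := Finset.mem_image.1 he
    simp only [pairsLt, Finset.mem_filter, Finset.mem_univ, true_and] at hp
    simpa using hp.2.1
  · rintro i j k ⟨a, b, c, d⟩
    have m1 := mem (fun x y => G.Adj x y ∧ C x ≠ C y) (fun x y h => ⟨h.1.symm, h.2.symm⟩)
    have m2 := mem (fun x y => ¬ G.Adj x y ∧ C x = C y)
      (fun x y h => ⟨fun q => h.1 q.symm, h.2.symm⟩)
    by_cases e1 : C i = C k
    · by_cases e2 : C j = C k
      · exact Or.inr (Or.inr (by convert m2 i j c ⟨d, e1.trans e2.symm⟩))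
      · exact Or.inr (Or.inl (by convert m1 j k b.ne ⟨b, e2⟩))
    · exact Or.inl (by convert m1 i k a.ne ⟨a, e1⟩)
  · refine (Nat.add_le_add Finset.card_image_le Finset.card_image_le).trans ?_
    rw [add_comm, disagreements, Finset.filter_or, Finset.card_union_of_disjoint]
    rw [Finset.disjoint_filter]
    tauto

/-- The optimal value of minSTC+ and the optimal cluster editing value satisfy
`OPT⁺ ≤ OPT^CE ≤ 2·OPT⁺`. -/
theorem stmt4 {V : Type*} [Fintype V] [LinearOrder V]
    (G : SimpleGraph V) [DecidableRel G.Adj] :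
    sInf {n : ℕ | ∃ E' EW : Finset (Sym2 V),
        IsSTCPlusLabeling G E' EW ∧ n = E'.card + EW.card}
      ≤ sInf {n : ℕ | ∃ C : V → ℕ, n = disagreements G C} ∧
    sInf {n : ℕ | ∃ C : V → ℕ, n = disagreements G C}
      ≤ 2 * sInf {n : ℕ | ∃ E' EW : Finset (Sym2 V),
          IsSTCPlusLabeling G E' EW ∧ n = E'.card + EW.card} := by
  have ne1 : {n : ℕ | ∃ C : V → ℕ, n = disagreements G C}.Nonempty := ⟨_, fun _ => 0, rfl⟩
  have ne2 : {n : ℕ | ∃ E' EW : Finset (Sym2 V),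
        IsSTCPlusLabeling G E' EW ∧ n = E'.card + EW.card}.Nonempty := by
    obtain ⟨E', EW, h, _⟩ := lower G (fun _ => 0)
    exact ⟨_, E', EW, h, rfl⟩
  constructor
  · obtain ⟨C, hC⟩ := Nat.sInf_mem ne1
    obtain ⟨E', EW, h, hle⟩ := lower G C
    rw [hC]
    exact le_trans (Nat.sInf_le ⟨E', EW, h, rfl⟩) hle
  · obtain ⟨E', EW, h, he⟩ := Nat.sInf_mem ne2
    obtain ⟨C, hC⟩ := upper G E' EW h
    rw [he]
    exact le_trans (Nat.sInf_le ⟨C, rfl⟩) hC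
end

section
/- Let G = (V,E) be a finite simple graph and let M be a collection of open wedges of G that is pairwise pair-disjoint (no unordered vertex pair belongs to two wedges of M, where the pairs of a wedge (i,j,k) are {i,j}, {i,k}, {j,k}) and maximal with this property (every open wedge of G shares a pair with some wedge in M). Then there exists a partition of V with at most 6·|M| disagreements; moreover every partition of V has at least |M| disagreements, so this partition has at most 6·OPT^CE disagreements, where OPT^CE is the minimum number of disagreements over all partitions of V. -/
open Finset

/-- The three unordered vertex pairs of a wedge `(i, j, k)`. -/
def wedgePairs {V : Type*} [DecidableEq V] (t : V × V × V) : Finset (Sym2 V) :=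
  {s(t.1, t.2.1), s(t.1, t.2.2), s(t.2.1, t.2.2)}


theorem rot3 {V : Type*} (S : Finset V) (F : V → V → V → ℤ) :
    ∑ k ∈ S, ∑ i ∈ S, ∑ j ∈ S, F i j k = ∑ k ∈ S, ∑ i ∈ S, ∑ j ∈ S, F j k i := by
  calc _ = ∑ k ∈ S, ∑ j ∈ S, ∑ i ∈ S, F i j k :=
        Finset.sum_congr rfl fun k _ => Finset.sum_comm
    _ = _ := Finset.sum_comm

open Classical in
theorem pivot_exists {V : Type*}
    (B : V → V → V → Prop) (c : V → V → ℤ)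
    (hBr : ∀ i j k, B i j k → B j k i)
    (hB : ∀ i j k, B i j k → 1 ≤ c i j + c j k + c k i)
    (S : Finset V) (hS : S.Nonempty) :
    ∃ k ∈ S, ∑ i ∈ S, ∑ j ∈ S, (if B i j k then 1 - 3 * c i j else 0) ≤ 0 := by
  by_contra! hcon
  have hpos := Finset.sum_pos hcon hS
  set F : V → V → V → ℤ := fun i j k => if B i j k then 1 - 3 * c i j else 0 with hF
  have e1 := rot3 S F
  have e2 := rot3 S (fun i j k => F j k i)
  have hle : ∑ k ∈ S, ∑ i ∈ S, ∑ j ∈ S, (F i j k + F j k i + F k i j) ≤ 0 := by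
    refine Finset.sum_nonpos fun k _ => Finset.sum_nonpos fun i _ =>
      Finset.sum_nonpos fun j _ => ?_
    by_cases h : B i j k
    · have h1 := hBr _ _ _ h
      have h2 := hBr _ _ _ h1
      have := hB _ _ _ h
      simp only [hF, if_pos h, if_pos h1, if_pos h2]
      linarith
    · have h1 : ¬ B j k i := fun h' => h (hBr _ _ _ (hBr _ _ _ h'))
      have h2 : ¬ B k i j := fun h' => h (hBr _ _ _ h')
      simp only [hF, if_neg h, if_neg h1, if_neg h2]
      norm_num
  simp only [Finset.sum_add_distrib] at hle
  simp only [hF] at *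
  linarith

open Classical in
/-- cost of a pair -/
noncomputable def dCost {V : Type*} (H : V → V → Prop) (c : V → V → ℤ) (C : V → ℕ) (i j : V) : ℤ :=
  if i = j then 0 else if (C i = C j ↔ H i j) then c i j else 1 - c i j

/-- bad triangle -/
def BadT {V : Type*} (H : V → V → Prop) (i j k : V) : Prop :=
  i ≠ j ∧ j ≠ k ∧ k ≠ i ∧ ((H i j ∧ H j k ∧ ¬ H k i) ∨ (H i j ∧ ¬ H j k ∧ H k i) ∨
    (¬ H i j ∧ H j k ∧ H k i))

open Classical in
theorem pivot_main_s5 {V : Type*} (H : V → V → Prop) (hs : ∀ i j, H i j ↔ H j i)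
    (c : V → V → ℤ) (h0 : ∀ i j, 0 ≤ c i j) (h1 : ∀ i j, c i j ≤ 1)
    (hB : ∀ i j k, BadT H i j k → 1 ≤ c i j + c j k + c k i) (n : ℕ) :
    ∀ S : Finset V, S.card ≤ n → ∃ C : V → ℕ,
      ∑ i ∈ S, ∑ j ∈ S, (dCost H c C i j - 2 * c i j) ≤ 0 := by
  induction n with
  | zero =>
    intro S hS
    have : S = ∅ := by simpa using hS
    subst this
    exact ⟨fun _ => 0, by simp⟩
  | succ n ih =>
    intro S hS
    rcases S.eq_empty_or_nonempty with rfl | hne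
    · exact ⟨fun _ => 0, by simp⟩
    obtain ⟨k, hk, hksum⟩ := pivot_exists (BadT H) c
      (by unfold BadT; intro i j k; tauto) hB S hne
    have hcard : (S.filter fun i => ¬ (i = k ∨ H k i)).card ≤ n := by
      have : (S.filter fun i => ¬ (i = k ∨ H k i)).card < S.card := by
        apply Finset.card_lt_card
        rw [Finset.filter_ssubset]
        exact ⟨k, hk, by simp⟩
      omega
    obtain ⟨C', hC'⟩ := ih _ hcard
    refine ⟨fun i => if i = k ∨ H k i then 0 else C' i + 1, ?_⟩
    rw [Finset.sum_filter] at hC'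
    have key : ∀ i j, dCost H c (fun i => if i = k ∨ H k i then 0 else C' i + 1) i j - 2 * c i j
        ≤ (if BadT H i j k then 1 - 3 * c i j else 0) +
          (if ¬ (i = k ∨ H k i) then (if ¬ (j = k ∨ H k j) then
            dCost H c C' i j - 2 * c i j else 0) else 0) := by
      intro i j
      have a0 := h0 i j
      have a1 := h1 i j
      have s1 := hs i j
      have s2 := hs j k
      have s3 := hs k i
      unfold dCost
      by_cases hij : i = j
      · subst hij
        have : ¬ BadT H i i k := fun h => h.1 rfl
        simp only [this, if_true, if_false]
        split_ifs <;> linarith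
      by_cases hi : i = k ∨ H k i <;> by_cases hj : j = k ∨ H k j
      · by_cases hh : H i j
        · simp only [hi, hj, hij, hh, if_true, if_false, not_true_eq_false]
          split_ifs with hb
          · exfalso; unfold BadT at hb; grind
          · simp; linarith
        · have hb : BadT H i j k := by unfold BadT; grind
          simp [hi, hj, hij, hh, hb]; linarith
      · by_cases hh : H i j
        · by_cases hik : i = k
          · grind
          have hb : BadT H i j k := by unfold BadT; grind
          simp [hi, hj, hij, hh, hb]; linarith
        · have hb : ¬ BadT H i j k := by unfold BadT; grind
          simp [hi, hj, hij, hh, hb]; linarith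
      · by_cases hh : H i j
        · by_cases hik : j = k
          · grind
          have hb : BadT H i j k := by unfold BadT; grind
          simp [hi, hj, hij, hh, hb]; linarith
        · have hb : ¬ BadT H i j k := by unfold BadT; grind
          simp [hi, hj, hij, hh, hb]; linarith
      · have hb : ¬ BadT H i j k := by unfold BadT; grind
        simp [hi, hj, hij, hb]
    refine (Finset.sum_le_sum fun i _ => Finset.sum_le_sum fun j _ => key i j).trans ?_
    simp only [Finset.sum_add_distrib]
    have e : ∑ i ∈ S, ∑ j ∈ S, (if ¬ (i = k ∨ H k i) then (if ¬ (j = k ∨ H k j) then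
            dCost H c C' i j - 2 * c i j else 0) else 0) ≤ 0 := by
      refine le_trans (le_of_eq ?_) hC'
      refine Finset.sum_congr rfl fun i _ => ?_
      split_ifs
      · simp
      · rw [Finset.sum_filter]
    linarith

open Classical in
theorem two_lt {V : Type*} [Fintype V] [LinearOrder V] (f : V → V → ℤ)
    (hs : ∀ i j, f i j = f j i) (hd : ∀ i, f i i = 0) :
    ∑ i, ∑ j, f i j = 2 * ∑ p ∈ pairsLt V, f p.1 p.2 := by
  have a : ∑ p ∈ pairsLt V, f p.1 p.2 = ∑ i, ∑ j, if i < j then f i j else 0 := by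
    unfold pairsLt
    rw [Finset.sum_filter, ← Finset.univ_product_univ, Finset.sum_product]
  have b : ∑ i, ∑ j, (if i < j then f i j else 0) = ∑ i, ∑ j, if j < i then f i j else 0 := by
    rw [Finset.sum_comm]
    refine Finset.sum_congr rfl fun i _ => Finset.sum_congr rfl fun j _ => ?_
    rw [hs]
  rw [a, two_mul]
  nth_rewrite 2 [b]
  simp only [← Finset.sum_add_distrib]
  refine Finset.sum_congr rfl fun i _ => Finset.sum_congr rfl fun j _ => ?_
  rcases lt_trichotomy i j with h | h | h
  · simp [h, h.not_gt]
  · subst h; simp [hd]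
  · simp [h, h.not_gt]


theorem stmt5_upper {V : Type*} [Fintype V] [LinearOrder V]
    (G : SimpleGraph V) [DecidableRel G.Adj]
    (M : Finset (V × V × V))
    (hmax : ∀ i j k : V, IsOpenWedge G i j k →
      ∃ t ∈ M, (wedgePairs (i, j, k) ∩ wedgePairs t).Nonempty) :
    ∃ C : V → ℕ, disagreements G C ≤ 6 * M.card := by
  classical
  set D : Finset (Sym2 V) := M.biUnion wedgePairs with hD
  have hDc : D.card ≤ M.card * 3 :=
    Finset.card_biUnion_le_card_mul _ _ _ fun t _ => Finset.card_le_three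
  have hw : ∀ i j k : V, IsOpenWedge G i j k → s(i,j) ∈ D ∨ s(i,k) ∈ D ∨ s(j,k) ∈ D := by
    intro i j k h
    obtain ⟨t, ht, e, he⟩ := hmax i j k h
    rw [Finset.mem_inter] at he
    have heD : e ∈ D := Finset.mem_biUnion.2 ⟨t, ht, he.2⟩
    have := he.1
    simp only [wedgePairs, Finset.mem_insert, Finset.mem_singleton] at this
    rcases this with rfl | rfl | rfl <;> simp [heD]
  let c : V → V → ℤ := fun i j => if i ≠ j ∧ s(i,j) ∈ D then 1 else 0
  let H : V → V → Prop := fun i j => (G.Adj i j ↔ s(i,j) ∉ D)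
  have hcs : ∀ i j, c i j = c j i := by
    intro i j; simp only [c, Sym2.eq_swap (a := i), ne_comm (a := i)]
  have hHs : ∀ i j, H i j ↔ H j i := by
    intro i j; simp only [H, Sym2.eq_swap (a := i), G.adj_comm i]
  obtain ⟨C, hC⟩ := pivot_main_s5 H hHs c (fun i j => by simp only [c]; split_ifs <;> simp)
    (fun i j => by simp only [c]; split_ifs <;> simp) (by
      rintro i j k ⟨hij, hjk, hki, hb⟩
      by_contra! hlt
      have n0 : ∀ i j, 0 ≤ c i j := fun i j => by simp only [c]; split_ifs <;> simp
      have n1 : ∀ i j, i ≠ j → c i j < 1 → s(i,j) ∉ D := fun i j hn h hd => by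
        simp [c, hn, hd] at h
      have x1 := n1 i j hij (by have := n0 j k; have := n0 k i; linarith)
      have x2 := n1 j k hjk (by have := n0 i j; have := n0 k i; linarith)
      have x3 := n1 k i hki (by have := n0 i j; have := n0 j k; linarith)
      simp only [H, x1, x2, x3, not_false_eq_true, iff_true] at hb
      have y1 : s(j,i) ∉ D := by rwa [Sym2.eq_swap]
      have y2 : s(k,j) ∉ D := by rwa [Sym2.eq_swap]
      have y3 : s(i,k) ∉ D := by rwa [Sym2.eq_swap]
      rcases hb with ⟨p, q, r⟩ | ⟨p, q, r⟩ | ⟨p, q, r⟩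
      · have := hw k i j ⟨q.symm, p, hki, r⟩; tauto
      · have := hw j k i ⟨p.symm, r, hjk, q⟩; tauto
      · have := hw i j k ⟨r.symm, q, hij, p⟩; tauto) _ Finset.univ le_rfl
  refine ⟨C, ?_⟩
  simp only [Finset.sum_sub_distrib, ← Finset.mul_sum] at hC
  rw [two_lt (dCost H c C) (by
    intro i j
    simp only [dCost, hcs i j, hHs i j, eq_comm (a := i), eq_comm (a := C i)]
    split_ifs <;> rfl)
    (by simp [dCost]), two_lt c hcs (by simp [c])] at hC
  have e1 : ∑ p ∈ pairsLt V, dCost H c C p.1 p.2 = (disagreements G C : ℤ) := by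
    unfold disagreements
    rw [Finset.card_filter]
    push_cast
    refine Finset.sum_congr rfl fun p hp => ?_
    have hne : p.1 ≠ p.2 := by
      simp only [pairsLt, Finset.mem_filter] at hp; exact hp.2.ne
    simp only [dCost, H, c, hne, if_false, ne_eq, not_false_eq_true, true_and]
    by_cases a : G.Adj p.1 p.2 <;> by_cases b : s(p.1,p.2) ∈ D <;> by_cases d : C p.1 = C p.2 <;>
      simp [a, b, d]
  have e2 : ∑ p ∈ pairsLt V, c p.1 p.2 ≤ (D.card : ℤ) := by
    simp only [c]
    rw [← Finset.sum_filter, Finset.sum_const, nsmul_eq_mul, mul_one]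
    norm_cast
    refine Finset.card_le_card_of_injOn (fun p => s(p.1, p.2)) (fun p hp => ?_) ?_
    · simp only [Finset.coe_filter, Set.mem_ofPred_eq] at hp
      exact hp.2.2
    · rintro ⟨a, b⟩ hp ⟨a', b'⟩ hq h
      simp only [pairsLt, Finset.coe_filter, Finset.mem_filter, Set.mem_ofPred_eq] at hp hq
      have h1 := hp.1.2
      have h2 := hq.1.2
      simp only [Sym2.eq_iff] at h
      rcases h with ⟨rfl, rfl⟩ | ⟨rfl, rfl⟩
      · rfl
      · exact absurd h1 h2.not_gt
  rw [e1] at hC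
  have : (disagreements G C : ℤ) ≤ 6 * M.card := by
    have : (D.card : ℤ) ≤ M.card * 3 := by exact_mod_cast hDc
    linarith
  exact_mod_cast this

theorem stmt5_lower {V : Type*} [Fintype V] [LinearOrder V]
    (G : SimpleGraph V) [DecidableRel G.Adj]
    (M : Finset (V × V × V))
    (hM : ∀ t ∈ M, IsOpenWedge G t.1 t.2.1 t.2.2)
    (hdisj : ∀ t₁ ∈ M, ∀ t₂ ∈ M, t₁ ≠ t₂ → Disjoint (wedgePairs t₁) (wedgePairs t₂))
    (C : V → ℕ) : M.card ≤ disagreements G C := by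
  classical
  set P : V → V → Prop := fun i j => (G.Adj i j ∧ C i ≠ C j) ∨ (¬ G.Adj i j ∧ C i = C j) with hP
  have hPs : ∀ i j, P i j → P j i := by
    intro i j; simp only [hP, G.adj_comm i, eq_comm (a := C i), ne_comm (a := C i)]; exact id
  have hex : ∀ i j, i ≠ j → P i j → ∃ p ∈ ((pairsLt V).filter fun p => P p.1 p.2),
      s(p.1, p.2) = s(i, j) := by
    intro i j hne h
    rcases lt_or_gt_of_ne hne with hl | hl
    · exact ⟨(i, j), by simp [pairsLt, hl, h], rfl⟩
    · exact ⟨(j, i), by simp [pairsLt, hl, hPs _ _ h], Sym2.eq_swap⟩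
  have hall : ∀ t ∈ M, ∃ p ∈ ((pairsLt V).filter fun p => P p.1 p.2),
      s(p.1, p.2) ∈ wedgePairs t := by
    rintro ⟨i, j, k⟩ ht
    obtain ⟨a, b, n, d⟩ := hM _ ht
    simp only at a b n d
    by_cases h1 : C i = C k
    · by_cases h2 : C j = C k
      · obtain ⟨p, hp, e⟩ := hex i j n (Or.inr ⟨d, h1.trans h2.symm⟩)
        exact ⟨p, hp, by simp [e, wedgePairs]⟩
      · obtain ⟨p, hp, e⟩ := hex j k b.ne (Or.inl ⟨b, h2⟩)
        exact ⟨p, hp, by simp [e, wedgePairs]⟩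
    · obtain ⟨p, hp, e⟩ := hex i k a.ne (Or.inl ⟨a, h1⟩)
      exact ⟨p, hp, by simp [e, wedgePairs]⟩
  have : M.card ≤ ((pairsLt V).filter fun p => P p.1 p.2).card := by
    refine Finset.card_le_card_of_forall_subsingleton
      (fun t p => s(p.1, p.2) ∈ wedgePairs t) hall ?_
    intro p _ t ht t' ht'
    by_contra hne
    exact Finset.disjoint_left.1 (hdisj t ht.1 t' ht'.1 hne) ht.2 ht'.2
  unfold disagreements
  convert this

/-- A maximal pair-disjoint collection `M` of open wedges yields a partition with at most
`6·|M|` disagreements; moreover `|M|` lower bounds the disagreements of every partition, so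
this partition is a 6-approximation for cluster editing. -/
theorem stmt5 {V : Type*} [Fintype V] [LinearOrder V]
    (G : SimpleGraph V) [DecidableRel G.Adj]
    (M : Finset (V × V × V))
    (hM : ∀ t ∈ M, IsOpenWedge G t.1 t.2.1 t.2.2)
    (hdisj : ∀ t₁ ∈ M, ∀ t₂ ∈ M, t₁ ≠ t₂ → Disjoint (wedgePairs t₁) (wedgePairs t₂))
    (hmax : ∀ i j k : V, IsOpenWedge G i j k →
      ∃ t ∈ M, (wedgePairs (i, j, k) ∩ wedgePairs t).Nonempty) :
    ∃ C : V → ℕ, disagreements G C ≤ 6 * M.card ∧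
      (∀ C' : V → ℕ, M.card ≤ disagreements G C') ∧
      disagreements G C ≤ 6 * sInf {n : ℕ | ∃ C' : V → ℕ, n = disagreements G C'} := by
  obtain ⟨C, hC⟩ := stmt5_upper G M hmax
  refine ⟨C, hC, stmt5_lower G M hM hdisj, hC.trans ?_⟩
  obtain ⟨C', hC'⟩ := Nat.sInf_mem (s := {n : ℕ | ∃ C' : V → ℕ, n = disagreements G C'})
    ⟨_, C, rfl⟩
  rw [hC']
  exact Nat.mul_le_mul_left 6 (stmt5_lower G M hM hdisj C')
end

section
/- Let G = (V,E) be a finite simple graph and let E_W ⊆ E be an STC labeling of G, i.e., for every open wedge (i,j,k) centered at k at least one of the edges {i,k}, {j,k} belongs to E_W. Then there exists a partition of V into cliques of G whose number of cut edges is at most 2·|E_W|. -/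
open Finset

open Classical in
noncomputable def cntR {V : Type*} (R : V → V → Prop) (X Y : Finset V) : ℕ :=
  ∑ a ∈ X, ∑ b ∈ Y, if R a b then 1 else 0

lemma cntR_comm {V : Type*} (R : V → V → Prop) (hR : ∀ a b, R a b → R b a) (X Y : Finset V) :
    cntR R X Y = cntR R Y X := by
  unfold cntR
  rw [Finset.sum_comm]
  refine Finset.sum_congr rfl fun a _ => Finset.sum_congr rfl fun b _ => ?_
  have e : R b a ↔ R a b := ⟨hR _ _, hR _ _⟩
  by_cases h : R a b <;> simp [h, e.not.2, e.2]

lemma cntR_split {V : Type*} [DecidableEq V] (R : V → V → Prop) (hR : ∀ a b, R a b → R b a)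
    (U K : Finset V) (hK : K ⊆ U) :
    cntR R U U = cntR R (U \ K) (U \ K) + cntR R K K + 2 * cntR R K (U \ K) := by
  have h1 : cntR R U U = cntR R (U \ K) U + cntR R K U := by
    unfold cntR
    rw [Finset.sum_sdiff hK]
  have h2 : ∀ X, cntR R X U = cntR R X (U \ K) + cntR R X K := by
    intro X
    unfold cntR
    rw [← Finset.sum_add_distrib]
    exact Finset.sum_congr rfl fun a _ => (Finset.sum_sdiff hK).symm
  rw [h1, h2, h2, cntR_comm R hR (U \ K) K]
  ring

lemma cntR_le {V : Type*} (R S : V → V → Prop) (X Y : Finset V)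
    (h : ∀ a ∈ X, ∀ b ∈ Y, R a b → S a b) : cntR R X Y ≤ cntR S X Y := by
  unfold cntR
  refine Finset.sum_le_sum fun a ha => Finset.sum_le_sum fun b hb => ?_
  have := h a ha b hb
  split_ifs <;> simp_all

lemma cntR_mono {V : Type*} (R : V → V → Prop) (X Y X' Y' : Finset V)
    (hX : X ⊆ X') (hY : Y ⊆ Y') : cntR R X Y ≤ cntR R X' Y' := by
  unfold cntR
  exact (Finset.sum_le_sum fun a _ => Finset.sum_le_sum_of_subset hY).trans
    (Finset.sum_le_sum_of_subset hX)

lemma cntR_or {V : Type*} (R S T : V → V → Prop) (X Y : Finset V)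
    (h : ∀ a ∈ X, ∀ b ∈ Y, R a b → S a b ∨ T a b) :
    cntR R X Y ≤ cntR S X Y + cntR T X Y := by
  unfold cntR
  rw [← Finset.sum_add_distrib]
  refine Finset.sum_le_sum fun a ha => ?_
  rw [← Finset.sum_add_distrib]
  refine Finset.sum_le_sum fun b hb => ?_
  have := h a ha b hb
  split_ifs <;> simp_all

/-- Restricting to a subset of pairs given by a predicate. -/
lemma cntR_restrict {V : Type*} (R S : V → V → Prop) (X Y X' Y' : Finset V)
    (hX : X ⊆ X') (hY : Y ⊆ Y') 
    (h : ∀ a ∈ X, ∀ b ∈ Y, R a b → S a b) : cntR R X Y ≤ cntR S X' Y' :=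
  (cntR_le R S X Y h).trans (cntR_mono S X Y X' Y' hX hY)

lemma cntR_restrict' {V : Type*} (R S : V → V → Prop) (X Y X' Y' : Finset V)
    (h : ∀ a ∈ X, ∀ b ∈ Y, R a b → a ∈ X' ∧ b ∈ Y' ∧ S a b) : cntR R X Y ≤ cntR S X' Y' := by
  classical
  have key : ∀ (R : V → V → Prop) (X Y : Finset V),
      cntR R X Y = ((X ×ˢ Y).filter fun p => R p.1 p.2).card := by
    intro R X Y
    unfold cntR
    rw [Finset.card_filter, Finset.sum_product]
  rw [key, key]
  apply Finset.card_le_card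
  intro p hp
  simp only [Finset.mem_filter, Finset.mem_product] at hp ⊢
  have := h p.1 hp.1.1 p.2 hp.1.2 hp.2
  tauto

lemma pivot_exists_s6 {V : Type*} (S W : V → V → Prop) (hS : ∀ a b, S a b → S b a)
    (U : Finset V) (hU : U.Nonempty) :
    ∃ k ∈ U, cntR (fun j l => S k j ∧ S j l ∧ W k l) U U ≤
      cntR (fun a b => S k a ∧ S k b ∧ W a b) U U := by
  apply Finset.exists_le_of_sum_le hU
  apply le_of_eq
  unfold cntR
  rw [Finset.sum_comm]
  refine Finset.sum_congr rfl fun a _ => Finset.sum_congr rfl fun b _ =>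
    Finset.sum_congr rfl fun c _ => ?_
  have : S b a ↔ S a b := ⟨hS _ _, hS _ _⟩
  by_cases h : S a b ∧ S a c ∧ W b c
  · rw [if_pos (show S b a ∧ S a c ∧ W b c from ⟨this.2 h.1, h.2⟩), if_pos h]
  · rw [if_neg (show ¬ (S b a ∧ S a c ∧ W b c) from fun h' => h ⟨this.1 h'.1, h'.2⟩), if_neg h]

lemma main_ind_s6 {V : Type*} [DecidableEq V] (A W : V → V → Prop)
    (hA : ∀ a b, A a b → A b a) (hW : ∀ a b, W a b → W b a)
    (hST : ∀ i j k, i ≠ j → A i k → ¬ W i k → A j k → ¬ W j k → A i j) (n : ℕ) :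
    ∀ U : Finset V, U.card ≤ n → ∃ C : V → ℕ,
      (∀ i ∈ U, ∀ j ∈ U, i ≠ j → C i = C j → A i j) ∧
      cntR (fun a b => A a b ∧ C a ≠ C b) U U ≤ 2 * cntR W U U := by
  classical
  induction n with
  | zero =>
    intro U hU
    obtain rfl : U = ∅ := by simpa using hU
    exact ⟨fun _ => 0, by simp, by simp [cntR]⟩
  | succ n ih =>
    intro U hU
    rcases U.eq_empty_or_nonempty with rfl | hne
    · exact ⟨fun _ => 0, by simp, by simp [cntR]⟩
    let S : V → V → Prop := fun a b => A a b ∧ ¬ W a b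
    have hS : ∀ a b, S a b → S b a := fun a b h => ⟨hA _ _ h.1, fun h' => h.2 (hW _ _ h')⟩
    obtain ⟨k, hkU, hk⟩ := pivot_exists_s6 S W hS U hne
    let K := U.filter fun v => v = k ∨ S k v
    have hKU : K ⊆ U := Finset.filter_subset _ _
    have hkK : k ∈ K := by simp [K, hkU]
    have hcard : (U \ K).card ≤ n := by
      have : (U \ K).card < U.card :=
        Finset.card_lt_card (Finset.sdiff_ssubset hKU ⟨k, hkK⟩)
      omega
    obtain ⟨C, hC1, hC2⟩ := ih (U \ K) hcard
    have mK : ∀ v, v ∈ K ↔ v ∈ U ∧ (v = k ∨ S k v) := by simp [K]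
    let C' : V → ℕ := fun v => if v ∈ K then 0 else C v + 1
    refine ⟨C', ?_, ?_⟩
    · intro i hi j hj hij hc
      by_cases h1 : i ∈ K <;> by_cases h2 : j ∈ K <;> simp [C', h1, h2] at hc
      · rcases ((mK i).1 h1).2 with rfl | h3
        · rcases ((mK j).1 h2).2 with rfl | h4
          · exact absurd rfl hij
          · exact h4.1
        · rcases ((mK j).1 h2).2 with rfl | h4
          · exact hA _ _ h3.1
          · exact hST i j k hij (hS _ _ h3).1 (hS _ _ h3).2 (hS _ _ h4).1 (hS _ _ h4).2
      · exact hC1 i (by simp [hi, h1]) j (by simp [hj, h2]) hij hc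
    · have e1 := cntR_split (fun a b => A a b ∧ C' a ≠ C' b)
        (fun a b h => ⟨hA _ _ h.1, h.2.symm⟩) U K hKU
      have e2 := cntR_split W hW U K hKU
      have e3 : cntR (fun a b => A a b ∧ C' a ≠ C' b) K K ≤ 0 := by
        refine (cntR_le _ (fun _ _ => False) K K ?_).trans (by simp [cntR])
        intro a ha b hb h
        simp [C', ha, hb] at h
      have e4 : cntR (fun a b => A a b ∧ C' a ≠ C' b) (U \ K) (U \ K) ≤
          cntR (fun a b => A a b ∧ C a ≠ C b) (U \ K) (U \ K) := by
        refine cntR_le _ _ _ _ ?_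
        intro a ha b hb h
        simp only [Finset.mem_sdiff] at ha hb
        simpa [C', ha.2, hb.2] using h
      have e5 : cntR (fun a b => A a b ∧ C' a ≠ C' b) K (U \ K) ≤
          cntR S K (U \ K) + cntR W K (U \ K) := by
        refine cntR_or _ _ _ _ _ ?_
        intro a _ b _ h
        by_cases hw : W a b
        · exact Or.inr hw
        · exact Or.inl ⟨h.1, hw⟩
      have e6 : cntR S K (U \ K) ≤ cntR (fun j l => S k j ∧ S j l ∧ W k l) U U := by
        refine cntR_restrict' _ _ _ _ _ _ ?_
        intro j hj l hl h
        rw [Finset.mem_sdiff, mK] at hl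
        rw [mK] at hj
        refine ⟨hj.1, hl.1, ?_⟩
        have hlk : l ≠ k := fun e => hl.2 ⟨hl.1, Or.inl e⟩
        have hlS : ¬ S k l := fun e => hl.2 ⟨hl.1, Or.inr e⟩
        rcases hj.2 with rfl | h4
        · exact absurd h hlS
        · have := hST k l j hlk.symm h4.1 h4.2 (hS _ _ h).1 (hS _ _ h).2
          refine ⟨h4, h, ?_⟩
          by_contra hw
          exact hlS ⟨this, hw⟩
      have e7 : cntR (fun a b => S k a ∧ S k b ∧ W a b) U U ≤ cntR W K K := by
        refine cntR_restrict' _ _ _ _ _ _ ?_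
        intro a ha b hb h
        exact ⟨(mK a).2 ⟨ha, Or.inr h.1⟩, (mK b).2 ⟨hb, Or.inr h.2.1⟩, h.2.2⟩
      omega

lemma cntR_eq_two {V : Type*} [Fintype V] [LinearOrder V] (R : V → V → Prop) [DecidableRel R]
    (hR : ∀ a b, R a b → R b a) (hirr : ∀ a, ¬ R a a) :
    cntR R univ univ = 2 * ((pairsLt V).filter fun p => R p.1 p.2).card := by
  have h1 : cntR R univ univ = cntR (fun a b => a < b ∧ R a b) univ univ +
      cntR (fun a b => b < a ∧ R b a) univ univ := by
    unfold cntR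
    rw [← Finset.sum_add_distrib]
    refine Finset.sum_congr rfl fun a _ => ?_
    rw [← Finset.sum_add_distrib]
    refine Finset.sum_congr rfl fun b _ => ?_
    have e : R b a ↔ R a b := ⟨hR _ _, hR _ _⟩
    rcases lt_trichotomy a b with h | rfl | h
    · simp [h, h.not_gt]
    · simp [hirr]
    · by_cases h' : R a b
      · simp [h, h.not_gt, h', e.2 h']
      · simp [h, h', e.not.2 h']
  have h2 : cntR (fun a b => b < a ∧ R b a) univ univ =
      cntR (fun a b => a < b ∧ R a b) univ univ := by
    unfold cntR
    rw [Finset.sum_comm]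
  have h3 : cntR (fun a b => a < b ∧ R a b) univ univ =
      ((pairsLt V).filter fun p => R p.1 p.2).card := by
    unfold cntR pairsLt
    rw [Finset.filter_filter, Finset.card_filter, ← Finset.univ_product_univ, Finset.sum_product]
    refine Finset.sum_congr rfl fun a _ => Finset.sum_congr rfl fun b _ => ?_
    congr
  rw [h1, h2, h3]
  ring

/-- Theorem: any STC labeling `E_W` of `G` can be rounded into a clique partition with at
most `2·|E_W|` cut edges. -/
theorem stmt6 {V : Type*} [Fintype V] [LinearOrder V]
    (G : SimpleGraph V) [DecidableRel G.Adj]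
    (EW : Finset (Sym2 V))
    (hEW : ∀ e ∈ EW, e ∈ G.edgeSet)
    (hlabel : ∀ i j k : V, IsOpenWedge G i j k → s(i, k) ∈ EW ∨ s(j, k) ∈ EW) :
    ∃ C : V → ℕ, IsCliquePartition G C ∧ cutEdges G C ≤ 2 * EW.card := by
  have hW : ∀ a b : V, s(a, b) ∈ EW → s(b, a) ∈ EW := fun a b h => by rwa [Sym2.eq_swap]
  obtain ⟨C, h1, h2⟩ := main_ind_s6 G.Adj (fun a b => s(a, b) ∈ EW) (fun a b h => h.symm) hW
    (by
      intro i j k hij hik hwi hjk hwj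
      by_contra h
      rcases hlabel i j k ⟨hik, hjk, hij, h⟩ with h' | h'
      · exact hwi h'
      · exact hwj h') _ univ le_rfl
  refine ⟨C, fun i j => h1 i (mem_univ _) j (mem_univ _), ?_⟩
  rw [cntR_eq_two _ (fun a b h => ⟨h.1.symm, h.2.symm⟩) (by simp),
    cntR_eq_two _ hW (fun a h => by simpa using hEW _ h)] at h2
  have h3 : ((pairsLt V).filter fun p => s(p.1, p.2) ∈ EW).card ≤ EW.card := by
    refine Finset.card_le_card_of_injOn (fun p => s(p.1, p.2)) ?_ ?_
    · intro p hp
      simp at hp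
      simpa using hp.2
    · rintro ⟨a, b⟩ hp ⟨c, d⟩ hq h
      simp [pairsLt] at hp hq h
      rcases h with h | ⟨rfl, rfl⟩
      · simp [h]
      · exact absurd hp.1 hq.1.not_gt
  have h4 : cutEdges G C =
    ((pairsLt V).filter fun p => G.Adj p.1 p.2 ∧ C p.1 ≠ C p.2).card := rfl
  omega
end

section
/- Let G = (V,E) be a finite simple graph. Let OPT^STC be the minimum size |E_W| of an STC labeling of G, and let OPT^CD be the minimum number of cut edges over all partitions of V into cliques of G (the optimal cluster deletion value). Then OPT^STC ≤ OPT^CD ≤ 2·OPT^STC. -/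
open Finset

/-- `E_W` is an STC labeling of `G`: a set of edges such that every open wedge `(i,j,k)`
centered at `k` has `{i,k} ∈ E_W` or `{j,k} ∈ E_W`. -/
def IsSTCLabeling {V : Type*} (G : SimpleGraph V) (EW : Finset (Sym2 V)) : Prop :=
  (∀ e ∈ EW, e ∈ G.edgeSet) ∧
    (∀ i j k : V, IsOpenWedge G i j k → s(i, k) ∈ EW ∨ s(j, k) ∈ EW)

open Classical in
/-- Number of ordered pairs in `A × B` satisfying `P`. -/
noncomputable def cntP {V : Type*} (A B : Finset V) (P : V → V → Prop) : ℕ :=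
  ∑ u ∈ A, ∑ v ∈ B, if P u v then 1 else 0

theorem cntP_mono {V : Type*} (A B : Finset V) (P Q : V → V → Prop)
    (h : ∀ u ∈ A, ∀ v ∈ B, P u v → Q u v) : cntP A B P ≤ cntP A B Q := by
  unfold cntP
  refine Finset.sum_le_sum fun u hu => Finset.sum_le_sum fun v hv => ?_
  have := h u hu v hv
  split_ifs <;> simp_all

theorem cntP_swap {V : Type*} (A B : Finset V) (P : V → V → Prop)
    (h : ∀ u v, P u v → P v u) : cntP A B P = cntP B A P := by
  unfold cntP
  rw [Finset.sum_comm]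
  refine Finset.sum_congr rfl fun u _ => Finset.sum_congr rfl fun v _ => ?_
  have : P u v ↔ P v u := ⟨h _ _, h _ _⟩
  by_cases hp : P u v
  · simp [hp, this.1 hp]
  · simp [hp, mt this.2 hp]

theorem cntP_split {V : Type*} [DecidableEq V] (S K : Finset V) (hK : K ⊆ S)
    (P : V → V → Prop) (h : ∀ u v, P u v → P v u) :
    cntP S S P = cntP (S \ K) (S \ K) P + cntP K K P + 2 * cntP K (S \ K) P := by
  have h1 := cntP_swap K (S \ K) P h
  have : cntP S S P = cntP (S \ K) (S \ K) P + cntP (S \ K) K P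
      + (cntP K (S \ K) P + cntP K K P) := by
    unfold cntP
    rw [← Finset.sum_sdiff hK]
    simp only [← Finset.sum_sdiff hK, Finset.sum_add_distrib]
  omega

theorem cntP_or {V : Type*} (A B : Finset V) (P Q R : V → V → Prop)
    (h : ∀ u ∈ A, ∀ v ∈ B, P u v → Q u v ∨ R u v) :
    cntP A B P ≤ cntP A B Q + cntP A B R := by
  unfold cntP
  simp only [← Finset.sum_add_distrib]
  refine Finset.sum_le_sum fun u hu => Finset.sum_le_sum fun v hv => ?_
  have := h u hu v hv
  split_ifs <;> simp_all

open Classical in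
theorem cntP_filter {V : Type*} (S : Finset V) (p q : V → Prop)
    [DecidablePred p] [DecidablePred q] (P : V → V → Prop) :
    cntP (S.filter p) (S.filter q) P = cntP S S (fun u v => p u ∧ q v ∧ P u v) := by
  unfold cntP
  rw [Finset.sum_filter]
  refine Finset.sum_congr rfl fun u _ => ?_
  rw [Finset.sum_filter]
  by_cases hp : p u
  · simp only [hp, if_true, true_and]
    refine Finset.sum_congr rfl fun v _ => ?_
    by_cases hq : q v <;> simp [hq]
  · simp [hp]

open Classical in
theorem exists_pivot_s7 {V : Type*} (S : Finset V) (hS : S.Nonempty)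
    (w s : V → V → Prop) (ssymm : ∀ u v, s u v → s v u)
    (wsymm : ∀ u v, w u v → w v u)
    (disj : ∀ u v, s u v → ¬ w u v)
    (wirr : ∀ u, ¬ w u u)
    (hsw : ∀ i j k, s i k → s j k → i ≠ j → s i j ∨ w i j) :
    ∃ k ∈ S, cntP (S.filter fun v => v = k ∨ s k v) (S.filter fun v => ¬ (v = k ∨ s k v)) s
      ≤ cntP (S.filter fun v => v = k ∨ s k v) (S.filter fun v => v = k ∨ s k v) w := by
  apply Finset.exists_le_of_sum_le hS
  simp only [cntP_filter]
  calc _ ≤ ∑ k ∈ S, cntP S S (fun j m => s k j ∧ s j m ∧ w k m) := by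
        refine Finset.sum_le_sum fun k _ => cntP_mono _ _ _ _ ?_
        rintro j _ m _ ⟨h1, h2, h3⟩
        push Not at h2
        rcases h1 with rfl | h1
        · exact absurd h3 h2.2
        · refine ⟨h1, h3, ?_⟩
          rcases hsw k m j h1 (ssymm _ _ h3) (Ne.symm h2.1) with h | h
          · exact absurd h h2.2
          · exact h
    _ = ∑ j ∈ S, cntP S S (fun k m => s k j ∧ s j m ∧ w k m) := by
        unfold cntP
        rw [Finset.sum_comm]
    _ ≤ _ := by
        refine Finset.sum_le_sum fun j _ => cntP_mono _ _ _ _ ?_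
        rintro k _ m _ ⟨h1, h2, h3⟩
        exact ⟨Or.inr (ssymm _ _ h1), Or.inr h2, h3⟩

open Classical in
theorem exists_clustering {V : Type*} (w s : V → V → Prop) (ssymm : ∀ u v, s u v → s v u)
    (wsymm : ∀ u v, w u v → w v u)
    (disj : ∀ u v, s u v → ¬ w u v)
    (wirr : ∀ u, ¬ w u u)
    (hsw : ∀ i j k, s i k → s j k → i ≠ j → s i j ∨ w i j) (n : ℕ) :
    ∀ S : Finset V, S.card = n → ∃ C : V → ℕ,
      (∀ i ∈ S, ∀ j ∈ S, i ≠ j → C i = C j → s i j ∨ w i j) ∧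
      cntP S S (fun u v => (s u v ∨ w u v) ∧ C u ≠ C v) ≤ 2 * cntP S S w := by
  induction n using Nat.strong_induction_on with
  | _ n ih =>
  intro S hn
  rcases S.eq_empty_or_nonempty with rfl | hS
  · exact ⟨fun _ => 0, by simp, by simp [cntP]⟩
  obtain ⟨k, hk, hle⟩ := exists_pivot_s7 S hS w s ssymm wsymm disj wirr hsw
  rw [Finset.filter_not] at hle
  set K := S.filter (fun v => v = k ∨ s k v) with hK
  have hKS : K ⊆ S := Finset.filter_subset _ _
  have hkK : k ∈ K := by simp [hK, hk]
  have hlt : (S \ K).card < n := by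
    rw [← hn]
    apply Finset.card_lt_card
    refine ⟨Finset.sdiff_subset, fun h => ?_⟩
    have := h hk
    simp [hkK] at this
  obtain ⟨C, hC1, hC2⟩ := ih _ hlt (S \ K) rfl
  refine ⟨fun v => if v ∈ K then 0 else C v + 1, ?_, ?_⟩
  · intro i hi j hj hij hc
    by_cases h1 : i ∈ K <;> by_cases h2 : j ∈ K <;> simp [h1, h2] at hc
    · simp only [hK, Finset.mem_filter] at h1 h2
      rcases h1.2 with rfl | h1' <;> rcases h2.2 with rfl | h2'
      · exact absurd rfl hij
      · exact Or.inl h2'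
      · exact Or.inl (ssymm _ _ h1')
      · exact hsw i j k (ssymm _ _ h1') (ssymm _ _ h2') hij
    · exact hC1 i (by simp [hi, h1]) j (by simp [hj, h2]) hij hc
  · rw [cntP_split S K hKS w wsymm, cntP_split S K hKS]
    · have e1 : cntP (S \ K) (S \ K) (fun u v => (s u v ∨ w u v) ∧
          (if u ∈ K then 0 else C u + 1) ≠ (if v ∈ K then 0 else C v + 1)) ≤
          cntP (S \ K) (S \ K) (fun u v => (s u v ∨ w u v) ∧ C u ≠ C v) := by
        apply cntP_mono
        intro u hu v hv h
        simp only [Finset.mem_sdiff] at hu hv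
        simpa [hu.2, hv.2] using h
      have e2 : cntP K K (fun u v => (s u v ∨ w u v) ∧
          (if u ∈ K then 0 else C u + 1) ≠ (if v ∈ K then 0 else C v + 1)) ≤ 0 := by
        have : cntP K K (fun _ _ => False) = 0 := by simp [cntP]
        rw [← this]
        apply cntP_mono
        intro u hu v hv h
        simp [hu, hv] at h
      have e3 : cntP K (S \ K) (fun u v => (s u v ∨ w u v) ∧
          (if u ∈ K then 0 else C u + 1) ≠ (if v ∈ K then 0 else C v + 1)) ≤
          cntP K (S \ K) s + cntP K (S \ K) w :=
        cntP_or _ _ _ _ _ fun u _ v _ h => h.1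
      beta_reduce
      omega
    · rintro u v ⟨h1, h2⟩
      exact ⟨h1.imp (ssymm _ _) (wsymm _ _), h2.symm⟩

theorem cntP_univ {V : Type*} [Fintype V] [LinearOrder V] (P : V → V → Prop)
    [DecidablePred fun p : V × V => P p.1 p.2]
    (h : ∀ u v, P u v → P v u) (hirr : ∀ u, ¬ P u u) :
    cntP univ univ P = 2 * ((pairsLt V).filter fun p => P p.1 p.2).card := by
  classical
  have e1 : ((pairsLt V).filter fun p => P p.1 p.2).card
      = cntP univ univ (fun u v : V => u < v ∧ P u v) := by
    unfold pairsLt cntP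
    rw [Finset.filter_filter, Finset.card_filter, ← Finset.univ_product_univ,
      Finset.sum_product]
    exact Finset.sum_congr rfl fun u _ => Finset.sum_congr rfl fun v _ => by congr
  have e2 : cntP univ univ (fun u v : V => u < v ∧ P u v)
      = cntP univ univ (fun u v : V => v < u ∧ P u v) := by
    unfold cntP
    rw [Finset.sum_comm]
    refine Finset.sum_congr rfl fun u _ => Finset.sum_congr rfl fun v _ => ?_
    have : P u v ↔ P v u := ⟨h _ _, h _ _⟩
    simp [this]
  have e3 : cntP univ univ P = cntP univ univ (fun u v : V => u < v ∧ P u v)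
      + cntP univ univ (fun u v : V => v < u ∧ P u v) := by
    unfold cntP
    simp only [← Finset.sum_add_distrib]
    refine Finset.sum_congr rfl fun u _ => Finset.sum_congr rfl fun v _ => ?_
    rcases lt_trichotomy u v with hh | rfl | hh
    · simp [hh, hh.not_gt]
    · simp [hirr]
    · simp [hh, hh.not_gt]
  omega

/-- The optimal value of minSTC and the optimal cluster deletion value satisfy
`OPT^STC ≤ OPT^CD ≤ 2·OPT^STC`. -/
theorem stmt7 {V : Type*} [Fintype V] [LinearOrder V]
    (G : SimpleGraph V) [DecidableRel G.Adj] :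
    sInf {n : ℕ | ∃ EW : Finset (Sym2 V), IsSTCLabeling G EW ∧ n = EW.card}
      ≤ sInf {n : ℕ | ∃ C : V → ℕ, IsCliquePartition G C ∧ n = cutEdges G C} ∧
    sInf {n : ℕ | ∃ C : V → ℕ, IsCliquePartition G C ∧ n = cutEdges G C}
      ≤ 2 * sInf {n : ℕ | ∃ EW : Finset (Sym2 V), IsSTCLabeling G EW ∧ n = EW.card} := by
  classical
  have neSTC : {n : ℕ | ∃ EW : Finset (Sym2 V), IsSTCLabeling G EW ∧ n = EW.card}.Nonempty := by
    refine ⟨_, G.edgeFinset, ⟨fun e he => by simpa using he, ?_⟩, rfl⟩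
    intro i j k h
    left
    simpa using h.1
  have neCD : {n : ℕ | ∃ C : V → ℕ, IsCliquePartition G C ∧ n = cutEdges G C}.Nonempty := by
    refine ⟨_, fun v => (Fintype.equivFin V v : ℕ), ?_, rfl⟩
    intro i j hij h
    exact absurd ((Fintype.equivFin V).injective (Fin.ext h)) hij
  constructor
  · obtain ⟨C, hC, hn⟩ := Nat.sInf_mem neCD
    rw [hn]
    refine le_trans (Nat.sInf_le ⟨((pairsLt V).filter fun p =>
      G.Adj p.1 p.2 ∧ C p.1 ≠ C p.2).image (fun p => s(p.1, p.2)), ⟨?_, ?_⟩, rfl⟩)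
      Finset.card_image_le
    · intro e he
      simp only [Finset.mem_image, Finset.mem_filter] at he
      obtain ⟨p, hp, rfl⟩ := he
      exact hp.2.1
    · have key : ∀ i k, G.Adj i k → C i ≠ C k → s(i, k) ∈ ((pairsLt V).filter fun p =>
          G.Adj p.1 p.2 ∧ C p.1 ≠ C p.2).image (fun p => s(p.1, p.2)) := by
        intro i k h1 h2
        rw [Finset.mem_image]
        rcases lt_or_gt_of_ne h1.ne with h | h
        · exact ⟨(i, k), by simp [pairsLt, h, h1, h2], rfl⟩
        · exact ⟨(k, i), by simp [pairsLt, h, h1.symm, h2.symm], Sym2.eq_swap⟩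
      rintro i j k ⟨h1, h2, h3, h4⟩
      by_cases hi : C i = C k
      · right
        apply key _ _ h2
        intro hj
        exact h4 (hC i j h3 (hi.trans hj.symm))
      · exact Or.inl (key _ _ h1 hi)
  · obtain ⟨EW, ⟨hE, hW⟩, hn⟩ := Nat.sInf_mem neSTC
    rw [hn]
    have hadj : ∀ u v, s(u, v) ∈ EW → G.Adj u v := fun u v h => hE _ h
    have hsw : ∀ u v, s(u, v) ∈ EW → s(v, u) ∈ EW := fun u v h => by rwa [Sym2.eq_swap]
    obtain ⟨C, hC1, hC2⟩ := exists_clustering (fun u v => s(u, v) ∈ EW)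
      (fun u v => G.Adj u v ∧ s(u, v) ∉ EW)
      (fun u v h => ⟨h.1.symm, fun h' => h.2 (hsw _ _ h')⟩) hsw
      (fun u v h => h.2) (fun u h => (hadj _ _ h).ne rfl)
      (by
        rintro i j k ⟨h1, h2⟩ ⟨h3, h4⟩ hij
        by_cases h : G.Adj i j
        · by_cases h' : s(i, j) ∈ EW
          · exact Or.inr h'
          · exact Or.inl ⟨h, h'⟩
        · rcases hW i j k ⟨h1, h3, hij, h⟩ with h | h
          · exact absurd h h2
          · exact absurd h h4) _ univ rfl
    refine le_trans (Nat.sInf_le ⟨C, ?_, rfl⟩) ?_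
    · intro i j hij hc
      rcases hC1 i (mem_univ _) j (mem_univ _) hij hc with h | h
      · exact h.1
      · exact hadj _ _ h
    · have a1 : 2 * cutEdges G C ≤ cntP univ univ (fun u v =>
          ((G.Adj u v ∧ s(u, v) ∉ EW) ∨ s(u, v) ∈ EW) ∧ C u ≠ C v) := by
        unfold cutEdges
        rw [← cntP_univ (fun u v => G.Adj u v ∧ C u ≠ C v)
          (fun u v h => ⟨h.1.symm, h.2.symm⟩) (fun u h => h.2 rfl)]
        apply cntP_mono
        rintro u _ v _ ⟨h1, h2⟩
        refine ⟨?_, h2⟩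
        by_cases h : s(u, v) ∈ EW
        · exact Or.inr h
        · exact Or.inl ⟨h1, h⟩
      have a2 : cntP univ univ (fun u v => s(u, v) ∈ EW) ≤ 2 * EW.card := by
        rw [cntP_univ _ hsw (fun u h => (hadj _ _ h).ne rfl)]
        refine Nat.mul_le_mul_left 2 (Finset.card_le_card_of_injOn (fun p => s(p.1, p.2)) ?_ ?_)
        · intro p hp
          simp only [Finset.coe_filter, Set.mem_ofPred_eq] at hp
          exact hp.2
        · rintro ⟨a, b⟩ hp ⟨c, d⟩ hq h
          simp [pairsLt] at hp hq h
          rcases h with ⟨rfl, rfl⟩ | ⟨rfl, rfl⟩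
          · rfl
          · exact absurd hp.1 hq.1.not_gt
      omega
end

section
/- Let G = (V,E) be a finite simple graph and let M be a collection of open wedges of G that is pairwise edge-disjoint (no edge of G belongs to two wedges of M, where the edges of a wedge (i,j,k) centered at k are {i,k} and {j,k}) and maximal with this property (every open wedge of G shares an edge with some wedge in M). Then there exists a partition of V into cliques of G with at most 4·|M| cut edges; moreover every clique partition of G has at least |M| cut edges, so this clique partition has at most 4·OPT^CD cut edges, where OPT^CD is the minimum number of cut edges over all clique partitions of G. -/
open Finset

/-- The two edges of a wedge `(i, j, k)` centered at `k`, namely `{i,k}` and `{j,k}`. -/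
def wedgeEdges {V : Type*} [DecidableEq V] (t : V × V × V) : Finset (Sym2 V) :=
  {s(t.1, t.2.2), s(t.2.1, t.2.2)}

lemma pivot_aux_s8 {V : Type*} [DecidableEq V] (H F : V → V → Prop)
    [DecidableRel H] [DecidableRel F]
    (Hs : ∀ a b, H a b → H b a) (Hi : ∀ a, ¬ H a a) (Fi : ∀ a, ¬ F a a)
    (HF : ∀ a b, H a b → ¬ F a b) (Fs : ∀ a b, F a b → F b a)
    (hw : ∀ a b k, H a k → H b k → a ≠ b → H a b ∨ F a b) (n : ℕ) :
    ∀ S : Finset V, S.card ≤ n → ∃ C : V → ℕ,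
      (∀ a ∈ S, ∀ b ∈ S, a ≠ b → C a = C b → H a b ∨ F a b) ∧
      ((S ×ˢ S).filter fun p => H p.1 p.2 ∧ C p.1 ≠ C p.2).card ≤
        2 * ((S ×ˢ S).filter fun p => F p.1 p.2 ∧ C p.1 = C p.2).card := by
  induction n with
  | zero =>
    intro S hS
    have : S = ∅ := by simpa using hS
    subst this
    exact ⟨fun _ => 0, by simp, by simp⟩
  | succ n ih =>
    intro S hS
    rcases S.eq_empty_or_nonempty with h0 | hne
    · subst h0
      exact ⟨fun _ => 0, by simp, by simp⟩
    have key : ∃ k ∈ S,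
        (∑ j ∈ S, ∑ x ∈ S, if (H k j ∧ H j x ∧ x ≠ k ∧ ¬ H k x) then 1 else 0) ≤
        (∑ a ∈ S, ∑ b ∈ S, if (H k a ∧ H k b ∧ F a b) then 1 else 0) := by
      apply Finset.exists_le_of_sum_le hne
      rw [Finset.sum_comm]
      apply Finset.sum_le_sum
      intro j _
      apply Finset.sum_le_sum
      intro k _
      apply Finset.sum_le_sum
      intro x _
      by_cases h : (H k j ∧ H j x ∧ x ≠ k ∧ ¬ H k x)
      · have : H j k ∧ H j x ∧ F k x := by
          refine ⟨Hs _ _ h.1, h.2.1, ?_⟩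
          rcases hw k x j h.1 (Hs _ _ h.2.1) (Ne.symm h.2.2.1) with h' | h'
          · exact absurd h' h.2.2.2
          · exact h'
        rw [if_pos h, if_pos this]
      · rw [if_neg h]; exact Nat.zero_le _
    obtain ⟨k, hk, hle⟩ := key
    rw [← Finset.sum_product', ← Finset.sum_product', ← Finset.card_filter,
      ← Finset.card_filter] at hle
    set X := (S ×ˢ S).filter fun p : V × V => (H k p.1 ∧ H p.1 p.2 ∧ p.2 ≠ k ∧ ¬ H k p.2)
    set Y := (S ×ˢ S).filter fun p : V × V => (H k p.1 ∧ H k p.2 ∧ F p.1 p.2)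
    set S' := S.filter fun v => ¬ (v = k ∨ H k v) with hS'
    have hlt : S'.card < S.card := by
      apply Finset.card_lt_card
      refine Finset.filter_ssubset.2 ⟨k, hk, by simp⟩
    obtain ⟨C, hC1, hC2⟩ := ih S' (by omega)
    set m := S'.sup C + 1 with hm
    have hfresh : ∀ v ∈ S', C v ≠ m := by
      intro v hv
      have : C v ≤ S'.sup C := Finset.le_sup hv
      omega
    have hmem : ∀ v ∈ S, ¬ (v = k ∨ H k v) → v ∈ S' := by
      intro v hv h
      exact Finset.mem_filter.2 ⟨hv, h⟩
    set D : V → ℕ := fun v => if (v = k ∨ H k v) then m else C v with hD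
    have D1 : ∀ v, (v = k ∨ H k v) → D v = m := fun v h => if_pos h
    have D2 : ∀ v, ¬ (v = k ∨ H k v) → D v = C v := fun v h => if_neg h
    refine ⟨D, ?_, ?_⟩
    · intro a ha b hb hab hEq
      by_cases h1 : (a = k ∨ H k a) <;> by_cases h2 : (b = k ∨ H k b)
      · rcases h1 with rfl | h1
        · rcases h2 with rfl | h2
          · exact absurd rfl hab
          · exact Or.inl h2
        · rcases h2 with rfl | h2
          · exact Or.inl (Hs _ _ h1)
          · exact hw a b k (Hs _ _ h1) (Hs _ _ h2) hab
      · rw [D1 a h1, D2 b h2] at hEq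
        exact absurd hEq.symm (hfresh b (hmem b hb h2))
      · rw [D2 a h1, D1 b h2] at hEq
        exact absurd hEq (hfresh a (hmem a ha h1))
      · rw [D2 a h1, D2 b h2] at hEq
        exact hC1 a (hmem a ha h1) b (hmem b hb h2) hab hEq
    · set P := (S' ×ˢ S').filter fun p : V × V => H p.1 p.2 ∧ C p.1 ≠ C p.2
      set Q := (S' ×ˢ S').filter fun p : V × V => F p.1 p.2 ∧ C p.1 = C p.2
      have up : ((S ×ˢ S).filter fun p : V × V => H p.1 p.2 ∧ D p.1 ≠ D p.2) ⊆
          P ∪ (X ∪ X.image Prod.swap) := by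
        rintro ⟨a, b⟩ hp
        simp only [Finset.mem_filter, Finset.mem_product] at hp
        obtain ⟨⟨ha, hb⟩, hH, hne⟩ := hp
        simp only [Finset.mem_union, Finset.mem_image]
        by_cases h1 : (a = k ∨ H k a) <;> by_cases h2 : (b = k ∨ H k b)
        · exact absurd ((D1 a h1).trans (D1 b h2).symm) hne
        · right; left
          rcases h1 with rfl | h1
          · exact absurd (Or.inr hH) h2
          · push Not at h2
            simp only [X, Finset.mem_filter, Finset.mem_product]
            exact ⟨⟨ha, hb⟩, h1, hH, h2.1, h2.2⟩
        · right; right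
          refine ⟨(b, a), ?_, rfl⟩
          rcases h2 with rfl | h2
          · exact absurd (Or.inr (Hs _ _ hH)) h1
          · push Not at h1
            simp only [X, Finset.mem_filter, Finset.mem_product]
            exact ⟨⟨hb, ha⟩, h2, Hs _ _ hH, h1.1, h1.2⟩
        · left
          rw [D2 a h1, D2 b h2] at hne
          simp only [P, Finset.mem_filter, Finset.mem_product]
          exact ⟨⟨hmem a ha h1, hmem b hb h2⟩, hH, hne⟩
      have lo : Q ∪ Y ⊆ ((S ×ˢ S).filter fun p : V × V => F p.1 p.2 ∧ D p.1 = D p.2) := by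
        rintro ⟨a, b⟩ hp
        simp only [Finset.mem_filter, Finset.mem_product]
        rcases Finset.mem_union.1 hp with hp | hp
        · simp only [Q, hS', Finset.mem_filter, Finset.mem_product] at hp
          obtain ⟨⟨⟨ha, ha'⟩, hb, hb'⟩, hF, hc⟩ := hp
          exact ⟨⟨ha, hb⟩, hF, by rw [D2 a ha', D2 b hb', hc]⟩
        · simp only [Y, Finset.mem_filter, Finset.mem_product] at hp
          obtain ⟨⟨ha, hb⟩, h1, h2, hF⟩ := hp
          exact ⟨⟨ha, hb⟩, hF, by rw [D1 a (Or.inr h1), D1 b (Or.inr h2)]⟩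
      have dj : Disjoint Q Y := by
        rw [Finset.disjoint_left]
        rintro ⟨a, b⟩ hq hy
        simp only [Q, hS', Finset.mem_filter, Finset.mem_product] at hq
        simp only [Y, Finset.mem_filter, Finset.mem_product] at hy
        exact hq.1.1.2 (Or.inr hy.2.1)
      have c1 := Finset.card_le_card up
      have c2 := Finset.card_le_card lo
      rw [Finset.card_union_of_disjoint dj] at c2
      have c3 := Finset.card_union_le P (X ∪ X.image Prod.swap)
      have c4 := Finset.card_union_le X (X.image Prod.swap)
      have c5 : (X.image Prod.swap).card ≤ X.card := Finset.card_image_le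
      omega

lemma lower_aux {V : Type*} [Fintype V] [LinearOrder V]
    (G : SimpleGraph V) [DecidableRel G.Adj]
    (M : Finset (V × V × V))
    (hM : ∀ t ∈ M, IsOpenWedge G t.1 t.2.1 t.2.2)
    (hdisj : ∀ t₁ ∈ M, ∀ t₂ ∈ M, t₁ ≠ t₂ → Disjoint (wedgeEdges t₁) (wedgeEdges t₂))
    (C : V → ℕ) (hC : IsCliquePartition G C) : M.card ≤ cutEdges G C := by
  have edge : ∀ a b, G.Adj a b → C a ≠ C b →
      ∃ p ∈ ((pairsLt V).filter fun p => G.Adj p.1 p.2 ∧ C p.1 ≠ C p.2),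
        s(p.1, p.2) = s(a, b) := by
    intro a b h hc
    rcases lt_or_gt_of_ne h.ne with hl | hl
    · exact ⟨(a, b), by simp [pairsLt, hl, h, hc], rfl⟩
    · exact ⟨(b, a), by simp [pairsLt, hl, h.symm, hc.symm], Sym2.eq_swap⟩
  have : ∀ t : V × V × V, ∃ p : V × V, t ∈ M →
      p ∈ ((pairsLt V).filter fun p => G.Adj p.1 p.2 ∧ C p.1 ≠ C p.2) ∧
        s(p.1, p.2) ∈ wedgeEdges t := by
    intro t
    by_cases ht : t ∈ M
    · obtain ⟨h1, h2, h3, h4⟩ := hM t ht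
      by_cases hc : C t.1 = C t.2.2
      · have hc2 : C t.2.1 ≠ C t.2.2 := fun h => h4 (hC _ _ h3 (hc.trans h.symm))
        obtain ⟨p, hp, he⟩ := edge _ _ h2 hc2
        exact ⟨p, fun _ => ⟨hp, by simp [wedgeEdges, he]⟩⟩
      · obtain ⟨p, hp, he⟩ := edge _ _ h1 hc
        exact ⟨p, fun _ => ⟨hp, by simp [wedgeEdges, he]⟩⟩
    · exact ⟨(t.1, t.1), fun h => absurd h ht⟩
  choose f hf using this
  apply Finset.card_le_card_of_injOn f
  · intro t ht; exact (hf t ht).1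
  · intro t ht u hu h
    by_contra hne
    have h1 := (hf t ht).2
    have h2 := (hf u hu).2
    rw [← h] at h2
    exact Finset.disjoint_left.1 (hdisj t ht u hu hne) h1 h2

lemma upper_aux {V : Type*} [Fintype V] [LinearOrder V]
    (G : SimpleGraph V) [DecidableRel G.Adj]
    (M : Finset (V × V × V))
    (hM : ∀ t ∈ M, IsOpenWedge G t.1 t.2.1 t.2.2)
    (hmax : ∀ i j k : V, IsOpenWedge G i j k →
      ∃ t ∈ M, (wedgeEdges (i, j, k) ∩ wedgeEdges t).Nonempty) :
    ∃ C : V → ℕ, IsCliquePartition G C ∧ cutEdges G C ≤ 4 * M.card := by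
  classical
  let F : V → V → Prop := fun a b => ∃ t ∈ M, s(a, b) ∈ wedgeEdges t
  let H : V → V → Prop := fun a b => G.Adj a b ∧ ¬ F a b
  have Fs : ∀ a b, F a b → F b a := by
    rintro a b ⟨t, ht, h⟩
    exact ⟨t, ht, by rwa [Sym2.eq_swap]⟩
  have FG : ∀ a b, F a b → G.Adj a b := by
    rintro a b ⟨t, ht, h⟩
    obtain ⟨h1, h2, -, -⟩ := hM t ht
    simp only [wedgeEdges, Finset.mem_insert, Finset.mem_singleton] at h
    rw [← SimpleGraph.mem_edgeSet]
    rcases h with h | h <;> rw [h] <;> assumption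
  obtain ⟨C, hC1, hC2⟩ := pivot_aux_s8 H F (fun a b h => ⟨h.1.symm, fun h' => h.2 (Fs _ _ h')⟩)
    (fun a h => G.irrefl h.1) (fun a h => G.irrefl (FG _ _ h)) (fun a b h => h.2) Fs
    (by
      intro a b k ha hb hab
      by_cases hF : F a b
      · exact Or.inr hF
      refine Or.inl ⟨?_, hF⟩
      by_contra hn
      obtain ⟨t, ht, e, he⟩ := hmax a b k ⟨ha.1, hb.1, hab, hn⟩
      obtain ⟨he1, he2⟩ := Finset.mem_inter.1 he
      simp only [wedgeEdges, Finset.mem_insert, Finset.mem_singleton] at he1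
      rcases he1 with rfl | rfl
      · exact ha.2 ⟨t, ht, he2⟩
      · exact hb.2 ⟨t, ht, he2⟩) (Finset.univ : Finset V).card Finset.univ le_rfl
  refine ⟨C, ?_, ?_⟩
  · intro a b hab hc
    rcases hC1 a (Finset.mem_univ _) b (Finset.mem_univ _) hab hc with h | h
    · exact h.1
    · exact FG _ _ h
  set A := ((Finset.univ ×ˢ Finset.univ : Finset (V × V)).filter
    fun p => H p.1 p.2 ∧ C p.1 ≠ C p.2)
  set B := ((Finset.univ ×ˢ Finset.univ : Finset (V × V)).filter
    fun p => F p.1 p.2 ∧ C p.1 = C p.2)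
  set B' := ((Finset.univ ×ˢ Finset.univ : Finset (V × V)).filter
    fun p => F p.1 p.2 ∧ C p.1 ≠ C p.2)
  set K := ((pairsLt V).filter fun p => G.Adj p.1 p.2 ∧ C p.1 ≠ C p.2) with hK
  have k1 : K ∪ K.image Prod.swap ⊆ A ∪ B' := by
    have gen : ∀ a b, G.Adj a b → C a ≠ C b → (a, b) ∈ A ∪ B' := by
      intro a b h hc
      by_cases hF : F a b
      · exact Finset.mem_union_right _ (by simp [B', hF, hc])
      · exact Finset.mem_union_left _ (by simp [A, H, hF, hc, h])
    rintro ⟨a, b⟩ hp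
    rcases Finset.mem_union.1 hp with hp | hp
    · exact gen _ _ (Finset.mem_filter.1 hp).2.1 (Finset.mem_filter.1 hp).2.2
    · obtain ⟨⟨c, d⟩, hq, he⟩ := Finset.mem_image.1 hp
      cases he
      exact gen _ _ (Finset.mem_filter.1 hq).2.1.symm (Finset.mem_filter.1 hq).2.2.symm
  have k2 : Disjoint K (K.image Prod.swap) := by
    rw [Finset.disjoint_left]
    rintro ⟨a, b⟩ hp hp'
    obtain ⟨⟨c, d⟩, hq, he⟩ := Finset.mem_image.1 hp'
    cases he
    simp only [hK, pairsLt, Finset.mem_filter] at hp hq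
    exact lt_asymm hp.1.2 hq.1.2
  have k3 : (K.image Prod.swap).card = K.card :=
    Finset.card_image_of_injective _ Prod.swap_injective
  have k4 : B ∪ B' ⊆ M.biUnion fun t =>
      {(t.1, t.2.2), (t.2.2, t.1), (t.2.1, t.2.2), (t.2.2, t.2.1)} := by
    rintro ⟨a, b⟩ hp
    have hF : F a b := by
      rcases Finset.mem_union.1 hp with hp | hp
      · exact (Finset.mem_filter.1 hp).2.1
      · exact (Finset.mem_filter.1 hp).2.1
    obtain ⟨t, ht, h⟩ := hF
    refine Finset.mem_biUnion.2 ⟨t, ht, ?_⟩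
    simp only [wedgeEdges, Finset.mem_insert, Finset.mem_singleton, Sym2.eq_iff] at h
    simp only [Finset.mem_insert, Finset.mem_singleton, Prod.mk.injEq]
    tauto
  have k5 : Disjoint B B' := by
    rw [Finset.disjoint_left]
    intro p h1 h2
    exact (Finset.mem_filter.1 h2).2.2 (Finset.mem_filter.1 h1).2.2
  have c1 := Finset.card_le_card k1
  rw [Finset.card_union_of_disjoint k2] at c1
  have c2 := Finset.card_le_card k4
  rw [Finset.card_union_of_disjoint k5] at c2
  have c3 := Finset.card_union_le A B'
  have c4 : (M.biUnion fun t : V × V × V =>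
      ({(t.1, t.2.2), (t.2.2, t.1), (t.2.1, t.2.2), (t.2.2, t.2.1)} : Finset (V × V))).card
      ≤ M.card * 4 := Finset.card_biUnion_le_card_mul _ _ _ (fun t _ => Finset.card_le_four)
  change K.card ≤ _
  omega

/-- A maximal edge-disjoint collection `M` of open wedges yields a clique partition with at
most `4·|M|` cut edges; moreover `|M|` lower bounds the cut edges of every clique partition,
so this clique partition is a 4-approximation for cluster deletion. -/
theorem stmt8 {V : Type*} [Fintype V] [LinearOrder V]
    (G : SimpleGraph V) [DecidableRel G.Adj]
    (M : Finset (V × V × V))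
    (hM : ∀ t ∈ M, IsOpenWedge G t.1 t.2.1 t.2.2)
    (hdisj : ∀ t₁ ∈ M, ∀ t₂ ∈ M, t₁ ≠ t₂ → Disjoint (wedgeEdges t₁) (wedgeEdges t₂))
    (hmax : ∀ i j k : V, IsOpenWedge G i j k →
      ∃ t ∈ M, (wedgeEdges (i, j, k) ∩ wedgeEdges t).Nonempty) :
    ∃ C : V → ℕ, IsCliquePartition G C ∧ cutEdges G C ≤ 4 * M.card ∧
      (∀ C' : V → ℕ, IsCliquePartition G C' → M.card ≤ cutEdges G C') ∧
      cutEdges G C ≤ 4 * sInf {n : ℕ | ∃ C' : V → ℕ,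
        IsCliquePartition G C' ∧ n = cutEdges G C'} := by
  obtain ⟨C, h1, h2⟩ := upper_aux G M hM hmax
  have h3 := lower_aux G M hM hdisj
  refine ⟨C, h1, h2, h3, ?_⟩
  obtain ⟨C', hC', he⟩ := Nat.sInf_mem (s := {n : ℕ | ∃ C' : V → ℕ,
        IsCliquePartition G C' ∧ n = cutEdges G C'}) ⟨_, C, h1, rfl⟩
  rw [he]
  exact h2.trans (Nat.mul_le_mul_left 4 (h3 C' hC'))
end

section
/- Let G = (V,E) be a finite simple graph and let M be a collection of open wedges of G that is pairwise pair-disjoint: no unordered vertex pair belongs to two distinct wedges of M, where the pairs of a wedge (i,j,k) are {i,j}, {i,k}, {j,k}. Then every partition of V has at least |M| disagreements with respect to G. -/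
open Finset

/-- Every wedge contains a disagreeing pair. -/
lemma exists_bad_pair {V : Type*} [Fintype V] [LinearOrder V]
    (G : SimpleGraph V) [DecidableRel G.Adj] (C : V → ℕ) (t : V × V × V)
    (h : IsOpenWedge G t.1 t.2.1 t.2.2) :
    ∃ p : V × V, p ∈ ((pairsLt V).filter fun p =>
      (G.Adj p.1 p.2 ∧ C p.1 ≠ C p.2) ∨ (¬ G.Adj p.1 p.2 ∧ C p.1 = C p.2)) ∧
      s(p.1, p.2) ∈ wedgePairs t := by
  obtain ⟨i, j, k⟩ := t
  obtain ⟨h1, h2, h3, h4⟩ := h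
  have key : ∀ a b : V, a ≠ b → s(a, b) ∈ wedgePairs (i, j, k) →
      ((G.Adj a b ∧ C a ≠ C b) ∨ (¬ G.Adj a b ∧ C a = C b)) →
      ∃ p : V × V, p ∈ ((pairsLt V).filter fun p =>
      (G.Adj p.1 p.2 ∧ C p.1 ≠ C p.2) ∨ (¬ G.Adj p.1 p.2 ∧ C p.1 = C p.2)) ∧
      s(p.1, p.2) ∈ wedgePairs (i, j, k) := by
    intro a b hab hm hd
    rcases lt_or_gt_of_ne hab with hlt | hlt
    · exact ⟨(a, b), by simp only [pairsLt, mem_filter, mem_univ, true_and]; exact ⟨hlt, hd⟩, hm⟩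
    · refine ⟨(b, a), ?_, by rw [Sym2.eq_swap]; exact hm⟩
      simp only [pairsLt, mem_filter, mem_univ, true_and]
      rw [G.adj_comm b a, ne_comm, eq_comm (a := C b)]
      exact ⟨hlt, hd⟩
  by_cases hik : C i = C k
  · by_cases hjk : C j = C k
    · exact key i j h3 (by simp [wedgePairs]) (Or.inr ⟨h4, hik.trans hjk.symm⟩)
    · exact key j k h2.ne (by simp [wedgePairs]) (Or.inl ⟨h2, hjk⟩)
  · exact key i k h1.ne (by simp [wedgePairs]) (Or.inl ⟨h1, hik⟩)

/-- A pair-disjoint collection of open wedges lower bounds the number of disagreements of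
every partition. -/
theorem stmt9 {V : Type*} [Fintype V] [LinearOrder V]
    (G : SimpleGraph V) [DecidableRel G.Adj]
    (M : Finset (V × V × V))
    (hM : ∀ t ∈ M, IsOpenWedge G t.1 t.2.1 t.2.2)
    (hdisj : ∀ t₁ ∈ M, ∀ t₂ ∈ M, t₁ ≠ t₂ → Disjoint (wedgePairs t₁) (wedgePairs t₂)) :
    ∀ C : V → ℕ, M.card ≤ disagreements G C := by
  intro C
  have hex : ∀ t : V × V × V, ∃ p : V × V, t ∈ M → p ∈ ((pairsLt V).filter fun p =>
      (G.Adj p.1 p.2 ∧ C p.1 ≠ C p.2) ∨ (¬ G.Adj p.1 p.2 ∧ C p.1 = C p.2)) ∧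
      s(p.1, p.2) ∈ wedgePairs t := by
    intro t
    by_cases ht : t ∈ M
    · obtain ⟨p, hp⟩ := exists_bad_pair G C t (hM t ht)
      exact ⟨p, fun _ => hp⟩
    · exact ⟨(t.1, t.1), fun h => absurd h ht⟩
  choose f hf using hex
  refine Finset.card_le_card_of_injOn f (fun t ht => (hf t ht).1) ?_
  intro t₁ h₁ t₂ h₂ he
  by_contra hne
  refine Finset.disjoint_left.mp (hdisj t₁ h₁ t₂ h₂ hne) (hf t₁ h₁).2 ?_
  rw [he]
  exact (hf t₂ h₂).2
end

section
/- Let G = (V,E) be a finite simple graph and let M be a collection of open wedges of G that is pairwise edge-disjoint: no edge of G belongs to two distinct wedges of M, where the edges of a wedge (i,j,k) centered at k are {i,k} and {j,k}. Then every partition of V into cliques of G has at least |M| cut edges. -/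
open Finset

/-- An edge-disjoint collection of open wedges lower bounds the number of cut edges of
every clique partition. -/
theorem stmt10 {V : Type*} [Fintype V] [LinearOrder V]
    (G : SimpleGraph V) [DecidableRel G.Adj]
    (M : Finset (V × V × V))
    (hM : ∀ t ∈ M, IsOpenWedge G t.1 t.2.1 t.2.2)
    (hdisj : ∀ t₁ ∈ M, ∀ t₂ ∈ M, t₁ ≠ t₂ → Disjoint (wedgeEdges t₁) (wedgeEdges t₂)) :
    ∀ C : V → ℕ, IsCliquePartition G C → M.card ≤ cutEdges G C := by
  intro C hC
  have key : ∀ t ∈ M, ∃ p : V × V, (p.1 < p.2 ∧ G.Adj p.1 p.2 ∧ C p.1 ≠ C p.2) ∧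
      s(p.1, p.2) ∈ wedgeEdges t := by
    have aux : ∀ a b : V, G.Adj a b → C a ≠ C b → ∃ p : V × V,
        (p.1 < p.2 ∧ G.Adj p.1 p.2 ∧ C p.1 ≠ C p.2) ∧ s(p.1, p.2) = s(a, b) := by
      intro a b hab hc
      rcases lt_or_gt_of_ne hab.ne with h | h
      · exact ⟨(a, b), ⟨h, hab, hc⟩, rfl⟩
      · exact ⟨(b, a), ⟨h, hab.symm, hc.symm⟩, Sym2.eq_swap⟩
    intro t ht
    obtain ⟨h1, h2, h3, h4⟩ := hM t ht
    by_cases hc : C t.1 = C t.2.2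
    · have hc2 : C t.2.1 ≠ C t.2.2 := fun h => h4 (hC _ _ h3 (hc.trans h.symm))
      obtain ⟨p, hp, he⟩ := aux _ _ h2 hc2
      exact ⟨p, hp, by rw [he]; simp [wedgeEdges]⟩
    · obtain ⟨p, hp, he⟩ := aux _ _ h1 hc
      exact ⟨p, hp, by rw [he]; simp [wedgeEdges]⟩
  rcases M.eq_empty_or_nonempty with h0 | ⟨t0, _⟩
  · simp [h0]
  haveI : Nonempty (V × V) := ⟨(t0.1, t0.1)⟩
  choose! f hf hfe using key
  unfold cutEdges
  apply Finset.card_le_card_of_injOn f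
  · intro t ht
    simpa [pairsLt] using hf t ht
  · intro t ht u hu h
    by_contra hne
    refine Finset.disjoint_left.mp (hdisj t ht u hu hne) (hfe t ht) ?_
    rw [h]
    exact hfe u hu
end

section
/- Let G = (V,E) be a finite simple graph and let x assign to each pair {i,j} of distinct vertices a real number x_{ij} ∈ [0,1] such that x_{ij} ≤ x_{ik} + x_{jk} for every open wedge (i,j,k) centered at k. For each pair {i,j} define the budget b_{ij} = x_{ij} if {i,j} ∈ E and b_{ij} = 1 − x_{ij} if {i,j} ∉ E. Then for every ordered triple (i,j,k) of distinct vertices with x_{ij} < 1/2, x_{jk} < 1/2, and x_{ik} ≥ 1/2, one has 1_{{i,j} ∈ E} + 1_{{j,k} ∈ E} + 1_{{i,k} ∉ E} ≤ 4·(b_{ij} + b_{jk} + b_{ik}), where 1_{·} denotes the 0/1 indicator. -/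
open Finset

/-- Given a feasible solution `x` of the minSTC+ LP relaxation, with budgets
`b_{ij} = x_{ij}` for edges and `b_{ij} = 1 - x_{ij}` for non-edges, every ordered triple
`(i, j, k)` of distinct vertices with `x_{ij} < 1/2`, `x_{jk} < 1/2` and `x_{ik} ≥ 1/2`
satisfies `1_{{i,j} ∈ E} + 1_{{j,k} ∈ E} + 1_{{i,k} ∉ E} ≤ 4 (b_{ij} + b_{jk} + b_{ik})`. -/
theorem stmt18 {V : Type*} [Fintype V]
    (G : SimpleGraph V) [DecidableRel G.Adj]
    (x : V → V → ℝ) (hsym : ∀ i j, x i j = x j i)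
    (h01 : ∀ i j, i ≠ j → 0 ≤ x i j ∧ x i j ≤ 1)
    (hwedge : ∀ i j k : V, IsOpenWedge G i j k → x i j ≤ x i k + x j k) :
    ∀ i j k : V, i ≠ j → j ≠ k → i ≠ k →
      x i j < 1 / 2 → x j k < 1 / 2 → 1 / 2 ≤ x i k →
      (if G.Adj i j then (1 : ℝ) else 0) + (if G.Adj j k then (1 : ℝ) else 0) +
          (if G.Adj i k then (0 : ℝ) else 1)
        ≤ 4 * ((if G.Adj i j then x i j else 1 - x i j) +
               (if G.Adj j k then x j k else 1 - x j k) +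
               (if G.Adj i k then x i k else 1 - x i k)) := by
  intro i j k hij hjk hik h1 h2 h3
  have a1 := h01 i j hij
  have a2 := h01 j k hjk
  have a3 := h01 i k hik
  have hw : G.Adj i j → G.Adj j k → ¬ G.Adj i k → x i k ≤ x i j + x j k := by
    intro p q r
    have := hwedge i k j ⟨p, q.symm, hik, r⟩
    rwa [hsym k j] at this
  by_cases p : G.Adj i j <;> by_cases q : G.Adj j k <;> by_cases r : G.Adj i k <;>
    simp only [p, q, r, if_true, if_false] <;>
    first
    | linarith [a1.1, a1.2, a2.1, a2.2, a3.1, a3.2]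
    | linarith [hw p q r]
end
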